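/- arXiv:math-ph/0102029 — 2 statements merged into one kernel-verified Lean document; each statement's English description precedes it below -/
import Mathlib

section
/- Suppose q1 and q2 are continuous real-valued potentials on [0,1], a is an admissible boundary pulse, and u1, u2 are classical solutions of the heat problem for q1 and q2 respectively, with the same boundary data a. If the fluxes at the right endpoint agree, i.e. ∂x u1(1,t) = ∂x u2(1,t) for all t > 0, then q1 = q2 on [0,1]. -/
/-- An admissible boundary pulse: integrable on `(0,∞)`, vanishing beyond some
`T > 0`, and not almost everywhere zero. -/
def IsAdmissiblePulse (a : ℝ → ℝ) : Prop :=
  MeasureTheory.IntegrableOn a (Set.Ioi 0) ∧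
  (∃ T > (0:ℝ), ∀ t > T, a t = 0) ∧
  ¬ (a =ᵐ[MeasureTheory.volume.restrict (Set.Ioi 0)] 0)

/-- `u` (with partial derivatives `ux`, `uxx` in `x` and `ut` in `t`) is a
classical solution of `u_t = u_xx - q(x) u` on `[0,1] × (0,∞)` with zero initial
data, `u(0,t) = 0` and `u(1,t) = a(t)`. -/
def IsHeatSolution (q a : ℝ → ℝ) (u ux uxx ut : ℝ → ℝ → ℝ) : Prop :=
  ContinuousOn (fun p : ℝ × ℝ => u p.1 p.2) (Set.Icc 0 1 ×ˢ Set.Ici 0) ∧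
  (∀ t > (0:ℝ), ∀ x ∈ Set.Icc (0:ℝ) 1, HasDerivAt (fun y => u y t) (ux x t) x) ∧
  (∀ t > (0:ℝ), ∀ x ∈ Set.Icc (0:ℝ) 1, HasDerivAt (fun y => ux y t) (uxx x t) x) ∧
  (∀ t > (0:ℝ), ContinuousOn (fun x => uxx x t) (Set.Icc 0 1)) ∧
  (∀ x ∈ Set.Icc (0:ℝ) 1, ∀ t > (0:ℝ), HasDerivAt (fun s => u x s) (ut x t) t) ∧
  (∀ x ∈ Set.Icc (0:ℝ) 1, ContinuousOn (fun t => ut x t) (Set.Ioi 0)) ∧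
  (∀ x ∈ Set.Ioo (0:ℝ) 1, ∀ t > (0:ℝ), ut x t = uxx x t - q x * u x t) ∧
  (∀ x ∈ Set.Icc (0:ℝ) 1, u x 0 = 0) ∧
  (∀ t > (0:ℝ), u 0 t = 0 ∧ u 1 t = a t)

/-- Exponential growth bound `|u| + |u_x| ≤ C e^{c t}` on `[0,1] × [0,∞)`. -/
def HeatGrowthBound (u ux : ℝ → ℝ → ℝ) (C c : ℝ) : Prop :=
  ∀ x ∈ Set.Icc (0:ℝ) 1, ∀ t ∈ Set.Ici (0:ℝ), |u x t| + |ux x t| ≤ C * Real.exp (c * t)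



namespace HeatInv
open Set MeasureTheory Filter Topology

/-- Extension of a continuous function on `[0,1]` to the line by constants. -/
noncomputable def ext (f : C(unitInterval, ℂ)) : ℝ → ℂ := Set.IccExtend zero_le_one f

lemma ext_cont (f : C(unitInterval, ℂ)) : Continuous (ext f) := f.continuous.Icc_extend'

lemma ext_of_mem (f : C(unitInterval, ℂ)) {x : ℝ} (hx : x ∈ Icc (0:ℝ) 1) : ext f x = f ⟨x, hx⟩ :=
  Set.IccExtend_of_mem _ _ hx

lemma ext_norm_le (f : C(unitInterval, ℂ)) (x : ℝ) : ‖ext f x‖ ≤ ‖f‖ := f.norm_coe_le_norm _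

lemma vol_hasDerivAt {g : ℝ → ℂ} (hg : Continuous g) (x : ℝ) :
    HasDerivAt (fun x : ℝ => ∫ t in (0:ℝ)..x, ((x:ℂ) - t) * g t) (∫ t in (0:ℝ)..x, g t) x := by
  have e : (fun x : ℝ => ∫ t in (0:ℝ)..x, ((x:ℂ) - t) * g t) =
      fun x : ℝ => (x:ℂ) * (∫ t in (0:ℝ)..x, g t) - ∫ t in (0:ℝ)..x, (t:ℂ) * g t := by
    funext x
    rw [← intervalIntegral.integral_const_mul, ← intervalIntegral.integral_sub]
    · congr 1; funext t; ring
    · exact (by fun_prop : Continuous _).intervalIntegrable _ _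
    · exact (by fun_prop : Continuous _).intervalIntegrable _ _
  rw [e]
  have h1 := (hg.integral_hasStrictDerivAt 0 x).hasDerivAt
  have h2 := ((by fun_prop : Continuous (fun t : ℝ => (t:ℂ) * g t)).integral_hasStrictDerivAt 0 x).hasDerivAt
  have h3 : HasDerivAt (fun x : ℝ => (x:ℂ)) 1 x := Complex.ofRealCLM.hasDerivAt
  exact ((h3.mul h1).sub h2).congr_deriv (by ring)

lemma vol_cont {g : ℝ → ℂ} (hg : Continuous g) :
    Continuous (fun x : ℝ => ∫ t in (0:ℝ)..x, ((x:ℂ) - t) * g t) :=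
  continuous_iff_continuousAt.2 fun x => (vol_hasDerivAt hg x).continuousAt

/-- The Volterra double integration operator. -/
noncomputable def Vlin : C(unitInterval, ℂ) →ₗ[ℂ] C(unitInterval, ℂ) where
  toFun f := ⟨fun x => ∫ t in (0:ℝ)..x, (((x:ℝ):ℂ) - t) * ext f t,
    (vol_cont (ext_cont f)).comp continuous_subtype_val⟩
  map_add' f g := by
    ext x
    simp only [ContinuousMap.coe_mk, ContinuousMap.add_apply]
    have := ext_cont f
    have := ext_cont g
    rw [← intervalIntegral.integral_add]
    · congr 1; funext t
      have : ext (f+g) t = ext f t + ext g t := rfl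
      rw [this]; ring
    · exact (by fun_prop : Continuous _).intervalIntegrable _ _
    · exact (by fun_prop : Continuous _).intervalIntegrable _ _
  map_smul' c f := by
    ext x
    simp only [ContinuousMap.coe_mk, ContinuousMap.smul_apply, RingHom.id_apply, smul_eq_mul]
    rw [← intervalIntegral.integral_const_mul]
    congr 1; funext t
    have : ext (c • f) t = c * ext f t := rfl
    rw [this]; ring

lemma vol_bound {f : C(unitInterval, ℂ)} {n : ℕ} {B : ℝ}
    (h : ∀ x : unitInterval, ‖f x‖ ≤ B * (x:ℝ) ^ n / n.factorial) (x : unitInterval) :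
    ‖Vlin f x‖ ≤ B * (x:ℝ) ^ (n+1) / (n+1).factorial := by
  have hx := x.2
  have h1 : ‖∫ t in (0:ℝ)..x, (((x:ℝ):ℂ) - t) * ext f t‖ ≤ ∫ t in (0:ℝ)..x, B * t ^ n / n.factorial := by
    apply intervalIntegral.norm_integral_le_of_norm_le hx.1
    · refine Eventually.of_forall fun t ht => ?_
      have ht' : t ∈ Icc (0:ℝ) 1 := ⟨ht.1.le, ht.2.trans hx.2⟩
      rw [norm_mul, ext_of_mem f ht']
      have h2 := h ⟨t, ht'⟩
      have h3 : ‖(((x:ℝ):ℂ) - t)‖ ≤ 1 := by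
        rw [← Complex.ofReal_sub, Complex.norm_real, Real.norm_eq_abs, abs_le]
        constructor <;> linarith [ht.1, ht.2, hx.2]
      calc _ ≤ 1 * ‖f ⟨t, ht'⟩‖ := by gcongr
        _ ≤ _ := by rw [one_mul]; exact h2
    · exact (by fun_prop : Continuous _).intervalIntegrable _ _
  refine h1.trans (le_of_eq ?_)
  rw [intervalIntegral.integral_div, intervalIntegral.integral_const_mul, integral_pow]
  rw [Nat.factorial_succ]
  push_cast
  have : (n.factorial : ℝ) ≠ 0 := by positivity
  field_simp
  simp

/-- The Volterra operator as a continuous linear map. -/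
noncomputable def V : C(unitInterval, ℂ) →L[ℂ] C(unitInterval, ℂ) :=
  Vlin.mkContinuous 1 (by
    intro f
    rw [ContinuousMap.norm_le _ (by positivity)]
    intro x
    have := vol_bound (f := f) (n := 0) (B := ‖f‖) (fun x => by simpa using f.norm_coe_le_norm x) x
    simp only [zero_add, pow_one, Nat.factorial_one, Nat.cast_one, div_one] at this
    calc _ ≤ _ := this
      _ ≤ _ := by rw [mul_comm]; exact mul_le_mul_of_nonneg_right x.2.2 (norm_nonneg _))

lemma V_apply (f : C(unitInterval, ℂ)) (x : unitInterval) :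
    V f x = ∫ t in (0:ℝ)..x, (((x:ℝ):ℂ) - t) * ext f t := rfl

/-- `f ↦ V (r f)`. -/
noncomputable def VT (r : C(unitInterval, ℂ)) : C(unitInterval, ℂ) →L[ℂ] C(unitInterval, ℂ) :=
  V ∘L (ContinuousLinearMap.mul ℂ C(unitInterval, ℂ) r)

lemma VT_pow (r f : C(unitInterval, ℂ)) (n : ℕ) : ∀ x : unitInterval,
    ‖((VT r) ^ n) f x‖ ≤ (‖r‖ ^ n * ‖f‖) * (x:ℝ) ^ n / n.factorial := by
  induction n with
  | zero => intro x; simpa using f.norm_coe_le_norm x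
  | succ n ih =>
    intro x
    rw [pow_succ']
    refine (vol_bound (f := r * ((VT r) ^ n) f) (n := n) (B := ‖r‖ ^ (n+1) * ‖f‖) ?_ x)
    intro x
    rw [ContinuousMap.mul_apply, norm_mul]
    calc _ ≤ ‖r‖ * ((‖r‖ ^ n * ‖f‖) * (x:ℝ) ^ n / n.factorial) := by
          gcongr
          · exact r.norm_coe_le_norm x
          · exact ih x
      _ = _ := by ring

lemma unit_of_pow {R : Type*} [NormedRing R] [HasSummableGeomSeries R] (x : R) (n : ℕ)
    (hx : ‖x ^ n‖ < 1) : IsUnit (1 - x) := by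
  have h3 : IsUnit (1 - x ^ n) := isUnit_one_sub_of_norm_lt_one hx
  rw [← mul_neg_geom_sum] at h3
  have hc : Commute (1 - x) (∑ i ∈ Finset.range n, x ^ i) := by
    rw [Commute, SemiconjBy, mul_neg_geom_sum, geom_sum_mul_neg]
  exact (hc.isUnit_mul_iff.1 h3).1

lemma diff_inv {R : Type*} [NormedRing R] [HasSummableGeomSeries R] [NormedAlgebra ℂ R] (f : ℂ → R)
    (hf : Differentiable ℂ f) (hu : ∀ s, IsUnit (1 - f s)) :
    Differentiable ℂ (fun s => Ring.inverse (1 - f s)) := fun s =>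
  DifferentiableAt.comp (g := Ring.inverse) (f := fun s => 1 - f s) s
    (differentiableAt_inverse (𝕜 := ℂ) (hu s)) ((hf s).const_sub 1)

lemma VT_unit (r : C(unitInterval, ℂ)) : IsUnit (1 - VT r) := by
  have h1 : ∀ n : ℕ, ‖(VT r) ^ n‖ ≤ ‖r‖ ^ n / n.factorial := by
    intro n
    apply ContinuousLinearMap.opNorm_le_bound _ (by positivity)
    intro f
    rw [ContinuousMap.norm_le _ (by positivity)]
    intro x
    refine (VT_pow r f n x).trans ?_
    have : (x:ℝ)^n ≤ 1 := pow_le_one₀ x.2.1 x.2.2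
    calc _ ≤ (‖r‖ ^ n * ‖f‖) * 1 / n.factorial := by gcongr
      _ = _ := by ring
  have h2 := FloorSemiring.tendsto_pow_div_factorial_atTop ‖r‖
  obtain ⟨n, hn⟩ := (h2.eventually (gt_mem_nhds zero_lt_one)).exists
  exact unit_of_pow (R := C(unitInterval, ℂ) →L[ℂ] C(unitInterval, ℂ)) (VT r) n ((h1 n).trans_lt hn)

/-- Existence of solutions of `y'' = (p + s) y`, entire in `s`. -/
theorem exists_sol (p : ℝ → ℝ) (hp : Continuous p) (α β : ℂ) :
    ∃ Y Y' : ℂ → ℝ → ℂ,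
      (∀ s x, HasDerivAt (Y s) (Y' s x) x) ∧
      (∀ s, ∀ x ∈ Icc (0:ℝ) 1, HasDerivAt (Y' s) ((p x + s) * Y s x) x) ∧
      (∀ s, Y s 0 = α) ∧ (∀ s, Y' s 0 = β) ∧
      (∀ x ∈ Icc (0:ℝ) 1, Differentiable ℂ (fun s => Y s x)) ∧
      Differentiable ℂ (fun s => Y' s 1) := by
  let pc : C(unitInterval, ℂ) := ⟨fun x => (p x : ℂ), by fun_prop⟩
  let y0 : C(unitInterval, ℂ) := ⟨fun x => α + β * ((x:ℝ):ℂ), by fun_prop⟩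
  let r : ℂ → C(unitInterval, ℂ) := fun s => pc + s • 1
  let y : ℂ → C(unitInterval, ℂ) := fun s => Ring.inverse (1 - VT (r s)) y0
  have hr : Differentiable ℂ r := by fun_prop
  have hVT : Differentiable ℂ (fun s => VT (r s)) := by
    unfold VT
    fun_prop
  have hy : Differentiable ℂ y := by
    intro s
    have h1 := diff_inv (R := C(unitInterval, ℂ) →L[ℂ] C(unitInterval, ℂ)) _ hVT
      (fun s => VT_unit (r s)) s
    exact h1.clm_apply (differentiableAt_const y0)
  have heq : ∀ s, y s = y0 + V (r s * y s) := by
    intro s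
    have h1 : (1 - VT (r s)) * Ring.inverse (1 - VT (r s)) = 1 := Ring.mul_inverse_cancel _ (VT_unit _)
    have h2 := congrArg (fun T : C(unitInterval, ℂ) →L[ℂ] C(unitInterval, ℂ) => T y0) h1
    have h3 : y s - V (r s * y s) = y0 := h2
    rw [← h3]; abel
  let g : ℂ → ℝ → ℂ := fun s => ext (r s * y s)
  have hg : ∀ s, Continuous (g s) := fun s => ext_cont _
  let Y : ℂ → ℝ → ℂ := fun s x => α + β * x + ∫ t in (0:ℝ)..x, ((x:ℂ) - t) * g s t
  let Y' : ℂ → ℝ → ℂ := fun s x => β + ∫ t in (0:ℝ)..x, g s t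
  have hYy : ∀ s x (hx : x ∈ Icc (0:ℝ) 1), Y s x = y s ⟨x, hx⟩ := by
    intro s x hx
    rw [heq]
    rfl
  refine ⟨Y, Y', ?_, ?_, ?_, ?_, ?_, ?_⟩
  · intro s x
    have h3 : HasDerivAt (fun x : ℝ => (x:ℂ)) 1 x := Complex.ofRealCLM.hasDerivAt
    have := ((h3.const_mul β).const_add α).add (vol_hasDerivAt (hg s) x)
    rw [mul_one] at this
    exact this
  · intro s x hx
    have h1 := (((hg s).integral_hasStrictDerivAt 0 x).hasDerivAt).const_add β
    refine h1.congr_deriv ?_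
    rw [hYy s x hx]
    change ext (r s * y s) x = _
    rw [ext_of_mem _ hx]
    simp [r, pc]
  · intro s; simp [Y]
  · intro s; simp [Y']
  · intro x hx
    have : (fun s => Y s x) = fun s => y s ⟨x, hx⟩ := by funext s; exact hYy s x hx
    rw [this]
    exact (ContinuousMap.evalCLM ℂ (⟨x, hx⟩ : unitInterval)).differentiable.comp hy
  · let L : C(unitInterval, ℂ) →ₗ[ℂ] ℂ :=
      { toFun := fun f => ∫ t in (0:ℝ)..1, ext f t
        map_add' := fun f g => by
          rw [← intervalIntegral.integral_add ((ext_cont f).intervalIntegrable _ _)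
            ((ext_cont g).intervalIntegrable _ _)]
          rfl
        map_smul' := fun c f => by
          simp only [RingHom.id_apply, smul_eq_mul]
          rw [← intervalIntegral.integral_const_mul]; rfl }
    let Lc : C(unitInterval, ℂ) →L[ℂ] ℂ := L.mkContinuous 1 (by
      intro f
      have := intervalIntegral.norm_integral_le_of_norm_le_const (a := 0) (b := 1) (f := ext f)
        (C := ‖f‖) (fun x _ => ext_norm_le f x)
      rw [sub_zero, abs_one, mul_comm] at this
      exact this)
    have : (fun s => Y' s 1) = fun s => β + Lc (r s * y s) := rfl
    rw [this]
    exact (differentiable_const _).add (Lc.differentiable.comp (hr.mul hy))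

end HeatInv


namespace HeatInv
open Set MeasureTheory Filter Topology

/-- `Y'' = (p + s) Y` on `[0,1]`, with `Y' = D`. -/
def IsSol (p : ℝ → ℝ) (s : ℂ) (Y D : ℝ → ℂ) : Prop :=
  (∀ x, HasDerivAt Y (D x) x) ∧ (∀ x ∈ Icc (0:ℝ) 1, HasDerivAt D ((p x + s) * Y x) x)

lemma IsSol.contY {p : ℝ → ℝ} {s : ℂ} {Y D : ℝ → ℂ} (h : IsSol p s Y D) : Continuous Y :=
  continuous_iff_continuousAt.2 fun x => (h.1 x).continuousAt

lemma IsSol.contD {p : ℝ → ℝ} {s : ℂ} {Y D : ℝ → ℂ} (h : IsSol p s Y D) :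
    ContinuousOn D (Icc 0 1) := fun x hx => (h.2 x hx).continuousAt.continuousWithinAt

lemma IsSol.reflect {p : ℝ → ℝ} {s : ℂ} {Y D : ℝ → ℂ} (h : IsSol p s Y D) :
    IsSol (fun y => p (1 - y)) s (fun y => Y (1 - y)) (fun y => - D (1 - y)) := by
  have hr : ∀ x : ℝ, HasDerivAt (fun y : ℝ => 1 - y) (-1) x := fun x => by
    simpa using (hasDerivAt_id x).const_sub 1
  refine ⟨fun x => ?_, fun x hx => ?_⟩
  · have := (h.1 (1 - x)).scomp x (hr x)
    exact this.congr_deriv (by simp)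
  · have := ((h.2 (1 - x) ⟨by linarith [hx.2], by linarith [hx.1]⟩).scomp x (hr x)).neg
    exact this.congr_deriv (by simp)

/-- Wronskians of two solutions of the same equation are constant. -/
lemma IsSol.wronskian {p : ℝ → ℝ} {s : ℂ} {Y D Z E : ℝ → ℂ} (h : IsSol p s Y D) (k : IsSol p s Z E)
    {x : ℝ} (hx : x ∈ Icc (0:ℝ) 1) : Y x * E x - D x * Z x = Y 0 * E 0 - D 0 * Z 0 := by
  have hd : ∀ x ∈ Icc (0:ℝ) 1, HasDerivAt (fun x => Y x * E x - D x * Z x) 0 x := by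
    intro x hx
    refine (((h.1 x).mul (k.2 x hx)).sub ((h.2 x hx).mul (k.1 x))).congr_deriv ?_
    ring
  exact constant_of_has_deriv_right_zero (fun x hx => (hd x hx).continuousAt.continuousWithinAt)
    (fun x hx => (hd x ⟨hx.1, hx.2.le⟩).hasDerivWithinAt) x hx

lemma norm_sinh_le (z : ℂ) : ‖Complex.sinh z‖ ≤ Real.exp |z.re| := by
  rw [Complex.sinh, norm_div]
  have h1 : ‖Complex.exp z - Complex.exp (-z)‖ ≤ Real.exp |z.re| + Real.exp |z.re| := by
    refine (norm_sub_le _ _).trans ?_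
    rw [Complex.norm_exp, Complex.norm_exp]
    gcongr
    · exact le_abs_self _
    · rw [Complex.neg_re]; exact neg_le_abs _
  have : ‖(2:ℂ)‖ = 2 := by simp
  rw [this]; linarith

lemma norm_cosh_le (z : ℂ) : ‖Complex.cosh z‖ ≤ Real.exp |z.re| := by
  rw [Complex.cosh, norm_div]
  have h1 : ‖Complex.exp z + Complex.exp (-z)‖ ≤ Real.exp |z.re| + Real.exp |z.re| := by
    refine (norm_add_le _ _).trans ?_
    rw [Complex.norm_exp, Complex.norm_exp]
    gcongr
    · exact le_abs_self _
    · rw [Complex.neg_re]; exact neg_le_abs _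
  have : ‖(2:ℂ)‖ = 2 := by simp
  rw [this]; linarith

lemma norm_sinh_ge (z : ℂ) (hz : 1 ≤ z.re) : Real.exp z.re / 4 ≤ ‖Complex.sinh z‖ := by
  rw [Complex.sinh, norm_div]
  have h1 : Real.exp z.re - Real.exp (-z.re) ≤ ‖Complex.exp z - Complex.exp (-z)‖ := by
    have := norm_sub_norm_le (Complex.exp z) (Complex.exp (-z))
    rwa [Complex.norm_exp, Complex.norm_exp, Complex.neg_re] at this
  have h2 : Real.exp (-z.re) ≤ Real.exp z.re / 2 := by
    have h3 : Real.exp (-z.re) ≤ 1 := Real.exp_le_one_iff.2 (by linarith)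
    have h4 := Real.add_one_le_exp z.re
    linarith
  have : ‖(2:ℂ)‖ = 2 := by simp
  rw [this]; linarith

lemma re_mul_real (κ : ℂ) (x : ℝ) (hx : 0 ≤ x) : |(κ * x).re| = |κ.re| * x := by
  simp [abs_mul, abs_of_nonneg hx]

lemma IsSol.repr {p : ℝ → ℝ} (hp : Continuous p) {κ : ℂ} {Y D : ℝ → ℂ} (h : IsSol p (κ^2) Y D)
    {x : ℝ} (hx : x ∈ Icc (0:ℝ) 1) :
    κ * Y x = Complex.sinh (κ * x) * D 0 + κ * Complex.cosh (κ * x) * Y 0 +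
      ∫ t in (0:ℝ)..x, Complex.sinh (κ * ((x - t : ℝ) : ℂ)) * (p t * Y t) := by
  have hY := h.contY
  have hl : ∀ t : ℝ, HasDerivAt (fun t : ℝ => κ * ((x - t : ℝ) : ℂ)) (-κ) t := by
    intro t
    have h1 : HasDerivAt (fun t : ℝ => ((x - t : ℝ) : ℂ)) (-1) t := by
      have := ((hasDerivAt_id t).const_sub x).ofReal_comp
      simpa using this
    exact (h1.const_mul κ).congr_deriv (by ring)
  have hs : ∀ t : ℝ, HasDerivAt (fun t : ℝ => Complex.sinh (κ * ((x - t : ℝ) : ℂ)))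
      (Complex.cosh (κ * ((x - t : ℝ) : ℂ)) * (-κ)) t := fun t =>
    (Complex.hasDerivAt_sinh _).comp t (hl t)
  have hc : ∀ t : ℝ, HasDerivAt (fun t : ℝ => Complex.cosh (κ * ((x - t : ℝ) : ℂ)))
      (Complex.sinh (κ * ((x - t : ℝ) : ℂ)) * (-κ)) t := fun t =>
    (Complex.hasDerivAt_cosh _).comp t (hl t)
  have key := intervalIntegral.integral_eq_sub_of_hasDerivAt (a := 0) (b := x)
    (f := fun t : ℝ => Complex.sinh (κ * ((x - t : ℝ) : ℂ)) * D t +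
      κ * (Complex.cosh (κ * ((x - t : ℝ) : ℂ)) * Y t))
    (f' := fun t => Complex.sinh (κ * ((x - t : ℝ) : ℂ)) * (p t * Y t)) ?_ ?_
  · rw [key]
    simp
    ring
  · intro t ht
    rw [uIcc_of_le hx.1] at ht
    have ht' : t ∈ Icc (0:ℝ) 1 := ⟨ht.1, ht.2.trans hx.2⟩
    refine (((hs t).mul (h.2 t ht')).add (((hc t).mul (h.1 t)).const_mul κ)).congr_deriv ?_
    ring
  · apply Continuous.intervalIntegrable
    have := Complex.continuous_sinh
    fun_prop

lemma IsSol.bound {p : ℝ → ℝ} (hp : Continuous p) {P : ℝ} (hP : ∀ x ∈ Icc (0:ℝ) 1, |p x| ≤ P)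
    {κ : ℂ} (hκ : 2 * P + 1 ≤ ‖κ‖) {Y D : ℝ → ℂ} (h : IsSol p (κ^2) Y D)
    {x : ℝ} (hx : x ∈ Icc (0:ℝ) 1) :
    ‖κ‖ * ‖Y x‖ ≤ 2 * (‖D 0‖ + ‖κ‖ * ‖Y 0‖) * Real.exp (|κ.re| * x) ∧
    ‖κ‖ * ‖κ * Y x - Complex.sinh (κ * x) * D 0 - κ * Complex.cosh (κ * x) * Y 0‖ ≤
      2 * P * (‖D 0‖ + ‖κ‖ * ‖Y 0‖) * Real.exp (|κ.re| * x) := by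
  have hY := h.contY
  have hP0 : 0 ≤ P := (abs_nonneg _).trans (hP 0 ⟨le_rfl, zero_le_one⟩)
  have hκ0 : 0 < ‖κ‖ := by linarith
  set τ := |κ.re| with hτ
  obtain ⟨x0, hx0, hmax⟩ := isCompact_Icc.exists_isMaxOn (⟨0, le_rfl, zero_le_one⟩ : (Icc (0:ℝ) 1).Nonempty)
    (f := fun x => ‖Y x‖ * Real.exp (-(τ * x))) (by fun_prop)
  set M := ‖Y x0‖ * Real.exp (-(τ * x0)) with hM
  have hM0 : 0 ≤ M := by positivity
  have hYM : ∀ t ∈ Icc (0:ℝ) 1, ‖Y t‖ ≤ M * Real.exp (τ * t) := by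
    intro t ht
    have h1 : ‖Y t‖ * Real.exp (-(τ * t)) ≤ M := hmax ht
    calc ‖Y t‖ = ‖Y t‖ * Real.exp (-(τ * t)) * Real.exp (τ * t) := by
          rw [mul_assoc, ← Real.exp_add]; simp
      _ ≤ _ := by gcongr
  have hIntg : ∀ x ∈ Icc (0:ℝ) 1,
      ‖∫ t in (0:ℝ)..x, Complex.sinh (κ * ((x - t : ℝ) : ℂ)) * (p t * Y t)‖ ≤ P * M * Real.exp (τ * x) := by
    intro x hx
    have := intervalIntegral.norm_integral_le_of_norm_le_const (a := 0) (b := x)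
      (f := fun t : ℝ => Complex.sinh (κ * ((x - t : ℝ) : ℂ)) * (p t * Y t))
      (C := P * M * Real.exp (τ * x)) ?_
    · refine this.trans ?_
      rw [sub_zero, abs_of_nonneg hx.1]
      exact mul_le_of_le_one_right (by positivity) hx.2
    · intro t ht
      rw [uIoc_of_le hx.1] at ht
      have ht' : t ∈ Icc (0:ℝ) 1 := ⟨ht.1.le, ht.2.trans hx.2⟩
      rw [norm_mul, norm_mul, Complex.norm_real, Real.norm_eq_abs]
      have h1 := norm_sinh_le (κ * ((x - t : ℝ) : ℂ))
      rw [re_mul_real _ _ (by linarith [ht.2])] at h1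
      calc _ ≤ Real.exp (τ * (x - t)) * (P * (M * Real.exp (τ * t))) := by
            gcongr
            · exact hP t ht'
            · exact hYM t ht'
        _ = P * M * (Real.exp (τ * (x - t)) * Real.exp (τ * t)) := by ring
        _ = _ := by rw [← Real.exp_add]; ring_nf
  have hall : ∀ x ∈ Icc (0:ℝ) 1, ‖κ‖ * ‖Y x‖ ≤ (‖D 0‖ + ‖κ‖ * ‖Y 0‖ + P * M) * Real.exp (τ * x) := by
    intro x hx
    rw [← norm_mul, h.repr hp hx]
    refine (norm_add_le _ _).trans ((add_le_add (norm_add_le _ _) (hIntg x hx)).trans ?_)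
    rw [norm_mul, norm_mul, norm_mul]
    have h1 := norm_sinh_le (κ * x)
    have h2 := norm_cosh_le (κ * x)
    rw [re_mul_real _ _ hx.1] at h1 h2
    calc _ ≤ Real.exp (τ * x) * ‖D 0‖ + ‖κ‖ * Real.exp (τ * x) * ‖Y 0‖ + P * M * Real.exp (τ * x) := by
          gcongr
      _ = _ := by ring
  have hMle : ‖κ‖ * M ≤ ‖D 0‖ + ‖κ‖ * ‖Y 0‖ + P * M := by
    have h1 := hall x0 hx0
    calc ‖κ‖ * M = ‖κ‖ * ‖Y x0‖ * Real.exp (-(τ * x0)) := by rw [hM]; ring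
      _ ≤ (‖D 0‖ + ‖κ‖ * ‖Y 0‖ + P * M) * Real.exp (τ * x0) * Real.exp (-(τ * x0)) := by gcongr
      _ = _ := by rw [mul_assoc, ← Real.exp_add]; simp
  have hPM : P * M ≤ ‖D 0‖ + ‖κ‖ * ‖Y 0‖ := by nlinarith
  have hkM : ‖κ‖ * M ≤ 2 * (‖D 0‖ + ‖κ‖ * ‖Y 0‖) := by linarith
  constructor
  · refine (hall x hx).trans ?_
    gcongr; linarith
  · have h1 := h.repr hp hx
    have h2 : κ * Y x - Complex.sinh (κ * x) * D 0 - κ * Complex.cosh (κ * x) * Y 0 =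
      ∫ t in (0:ℝ)..x, Complex.sinh (κ * ((x - t : ℝ) : ℂ)) * (p t * Y t) := by rw [h1]; ring
    rw [h2]
    calc _ ≤ ‖κ‖ * (P * M * Real.exp (τ * x)) := by gcongr; exact hIntg x hx
      _ = P * (‖κ‖ * M) * Real.exp (τ * x) := by ring
      _ ≤ P * (2 * (‖D 0‖ + ‖κ‖ * ‖Y 0‖)) * Real.exp (τ * x) := by gcongr
      _ = _ := by ring

lemma IsSol.lower {p : ℝ → ℝ} (hp : Continuous p) {P : ℝ} (hP : ∀ x ∈ Icc (0:ℝ) 1, |p x| ≤ P)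
    {κ : ℂ} (hκ : 16 * P + 1 ≤ ‖κ‖) {Y D : ℝ → ℂ} (h : IsSol p (κ^2) Y D) (h0 : Y 0 = 0) (h1 : D 0 = 1)
    {x : ℝ} (hx : x ∈ Icc (0:ℝ) 1) (hκx : 1 ≤ κ.re * x) :
    Real.exp (κ.re * x) / 8 ≤ ‖κ‖ * ‖Y x‖ := by
  have hP0 : 0 ≤ P := (abs_nonneg _).trans (hP 0 ⟨le_rfl, zero_le_one⟩)
  have hκ0 : 0 < ‖κ‖ := by linarith
  have hre : 0 < κ.re := by
    by_contra hn
    nlinarith [hx.1]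
  have hb := (h.bound hp hP (by linarith) hx).2
  rw [h0, h1, abs_of_pos hre] at hb
  simp only [mul_one, norm_one, norm_zero, mul_zero, add_zero, sub_zero] at hb
  have hs := norm_sinh_ge (κ * x) (by simpa using hκx)
  have hr : (κ * x).re = κ.re * x := by simp
  rw [hr] at hs
  have h2 : ‖κ * Y x - Complex.sinh (κ * x)‖ ≤ Real.exp (κ.re * x) / 8 := by
    have : ‖κ‖ * ‖κ * Y x - Complex.sinh (κ * x)‖ ≤ ‖κ‖ * (Real.exp (κ.re * x) / 8) := by
      refine hb.trans ?_
      have : 2 * P ≤ ‖κ‖ / 8 := by linarith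
      calc _ ≤ ‖κ‖ / 8 * Real.exp (κ.re * x) := by gcongr
        _ = _ := by ring
    exact le_of_mul_le_mul_left this hκ0
  have h3 := norm_sub_norm_le (Complex.sinh (κ * x)) (κ * Y x)
  rw [norm_sub_rev, norm_mul] at h3
  linarith

end HeatInv


namespace HeatInv
open Set MeasureTheory Filter Topology

lemma pl_vanish (F : ℂ → ℂ) (hF : Differentiable ℂ F) (K A : ℝ)
    (hgrow : ∀ κ : ℂ, K ≤ ‖κ‖ → ‖F (κ^2)‖ ≤ A * Real.exp (2 * ‖κ‖))
    (hray : ∀ κ : ℂ, K ≤ ‖κ‖ → ‖κ‖ / 2 ≤ κ.re → ‖κ‖ * ‖F (κ^2)‖ ≤ A) : ∀ s, F s = 0 := by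
  obtain ⟨c, hc0, hc2, hc1⟩ : ∃ c : ℝ, 0 < c ∧ c ^ 2 = 1/2 ∧ 1/2 ≤ c := by
    refine ⟨Real.sqrt (1/2), by positivity, Real.sq_sqrt (by norm_num), ?_⟩
    apply Real.le_sqrt_of_sq_le; norm_num
  have hn : ∀ d : ℝ, d ^ 2 = 1/2 → ‖(⟨c, d⟩ : ℂ)‖ = 1 := by
    intro d hd
    have : ‖(⟨c, d⟩ : ℂ)‖ ^ 2 = 1 := by
      rw [Complex.sq_norm, Complex.normSq_mk]; nlinarith
    nlinarith [norm_nonneg (⟨c, d⟩ : ℂ)]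
  have hn1 := hn c hc2
  have hn2 := hn (-c) (by rw [neg_sq]; exact hc2)
  have hw1 : (⟨c, c⟩ : ℂ) ^ 2 = Complex.I := by
    rw [pow_two]; apply Complex.ext <;> (simp; try nlinarith)
  have hw2 : (⟨c, -c⟩ : ℂ) ^ 2 = -Complex.I := by
    rw [pow_two]; apply Complex.ext <;> (simp; try nlinarith)
  have hax1 : ∀ r : ℝ, K ≤ |r| → |r| * ‖F (Complex.I * (r:ℂ) ^ 2)‖ ≤ A := by
    intro r hr
    have h1 : ‖(⟨c, c⟩ : ℂ) * (|r| : ℝ)‖ = |r| := by rw [norm_mul, hn1]; simp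
    have h2 := hray ((⟨c, c⟩ : ℂ) * (|r| : ℝ)) (by rw [h1]; exact hr) (by
      rw [h1]; simp; nlinarith [abs_nonneg r])
    rw [h1, mul_pow, hw1, ← Complex.ofReal_pow, sq_abs, Complex.ofReal_pow] at h2
    exact h2
  have hax2 : ∀ r : ℝ, K ≤ |r| → |r| * ‖F (-Complex.I * (r:ℂ) ^ 2)‖ ≤ A := by
    intro r hr
    have h1 : ‖(⟨c, -c⟩ : ℂ) * (|r| : ℝ)‖ = |r| := by rw [norm_mul, hn2]; simp
    have h2 := hray ((⟨c, -c⟩ : ℂ) * (|r| : ℝ)) (by rw [h1]; exact hr) (by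
      rw [h1]; simp; nlinarith [abs_nonneg r])
    rw [h1, mul_pow, hw2, ← Complex.ofReal_pow, sq_abs, Complex.ofReal_pow] at h2
    exact h2
  set f : ℂ → ℂ := fun z => F (Complex.I * z ^ 2) with hf
  have hfd : Differentiable ℂ f := by
    have : Differentiable ℂ (fun z : ℂ => Complex.I * z ^ 2) := by fun_prop
    exact hF.comp this
  have hfg : ∀ l : Filter ℂ, ∃ c < (2:ℝ), ∃ B : ℝ, f =O[Bornology.cobounded ℂ ⊓ l]
      fun z => Real.exp (B * ‖z‖ ^ c) := by
    intro l
    refine ⟨1, by norm_num, 2, ?_⟩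
    apply Asymptotics.IsBigO.of_bound A
    have h1 : ∀ᶠ z : ℂ in Bornology.cobounded ℂ, K ≤ ‖z‖ :=
      tendsto_norm_cobounded_atTop.eventually_ge_atTop K
    refine (h1.filter_mono inf_le_left).mono fun z hz => ?_
    have h2 : ‖(⟨c, c⟩ : ℂ) * z‖ = ‖z‖ := by rw [norm_mul, hn1, one_mul]
    have h3 := hgrow ((⟨c, c⟩ : ℂ) * z) (by rw [h2]; exact hz)
    rw [h2, mul_pow, hw1] at h3
    rw [Real.rpow_one, Real.norm_eq_abs, abs_of_pos (Real.exp_pos _)]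
    exact h3
  obtain ⟨C0, hC0⟩ := (isCompact_closedBall (0:ℂ) (max K 1)).exists_bound_of_continuousOn
    hfd.continuous.continuousOn
  have hA : 0 ≤ A := by
    have := hax1 (max K 1) (by rw [abs_of_pos (by positivity)]; exact le_max_left _ _)
    refine le_trans (by positivity) this
  have hb1 : ∀ r : ℝ, ‖f r‖ ≤ max C0 A := by
    intro r
    by_cases hr : |r| ≤ max K 1
    · exact (hC0 r (by simpa using hr)).trans (le_max_left _ _)
    · push Not at hr
      have h1 := hax1 r ((le_max_left _ _).trans hr.le)
      have h2 : 1 ≤ |r| := (le_max_right _ _).trans hr.le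
      refine le_trans ?_ (le_max_right _ _)
      refine le_trans ?_ h1
      exact le_mul_of_one_le_left (norm_nonneg _) h2
  have hb2 : ∀ r : ℝ, ‖f (r * Complex.I)‖ ≤ max C0 A := by
    intro r
    by_cases hr : |r| ≤ max K 1
    · exact (hC0 _ (by simpa using hr)).trans (le_max_left _ _)
    · push Not at hr
      have h1 := hax2 r ((le_max_left _ _).trans hr.le)
      have h2 : 1 ≤ |r| := (le_max_right _ _).trans hr.le
      refine le_trans ?_ (le_max_right _ _)
      refine le_trans ?_ h1
      have h3 : f (r * Complex.I) = F (-Complex.I * (r:ℂ) ^ 2) := by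
        simp only [hf]; congr 1; rw [mul_pow, Complex.I_sq]; ring
      rw [h3]
      exact le_mul_of_one_le_left (norm_nonneg _) h2
  have hball : ∀ z, ‖f z‖ ≤ max C0 A := by
    intro z
    rcases le_total 0 z.re with h1 | h1 <;> rcases le_total 0 z.im with h2 | h2
    · exact PhragmenLindelof.quadrant_I hfd.diffContOnCl (hfg _) (fun x _ => hb1 x) (fun x _ => hb2 x) h1 h2
    · exact PhragmenLindelof.quadrant_IV hfd.diffContOnCl (hfg _) (fun x _ => hb1 x) (fun x _ => hb2 x) h1 h2
    · exact PhragmenLindelof.quadrant_II hfd.diffContOnCl (hfg _) (fun x _ => hb1 x) (fun x _ => hb2 x) h1 h2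
    · exact PhragmenLindelof.quadrant_III hfd.diffContOnCl (hfg _) (fun x _ => hb1 x) (fun x _ => hb2 x) h1 h2
  have hconst := hfd.apply_eq_apply_of_bounded (isBounded_iff_forall_norm_le.2
    ⟨max C0 A, by rintro _ ⟨z, rfl⟩; exact hball z⟩)
  have h0 : f 0 = 0 := by
    by_contra hne
    have hpos : 0 < ‖f 0‖ := norm_pos_iff.2 hne
    set r := max (max K 1) ((A + 1) / ‖f 0‖) with hr
    have hr0 : 0 < r := by positivity
    have h1 := hax1 r (by rw [abs_of_pos hr0]; exact (le_max_left _ _).trans (le_max_left _ _))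
    have h2 : F (Complex.I * (r:ℂ) ^ 2) = f 0 := hconst (r:ℂ) 0
    rw [h2, abs_of_pos hr0] at h1
    have h3 : (A + 1) / ‖f 0‖ ≤ r := le_max_right _ _
    rw [div_le_iff₀ hpos] at h3
    linarith
  intro s
  obtain ⟨z, hz⟩ := IsAlgClosed.exists_pow_nat_eq (-Complex.I * s) (n := 2) (by norm_num)
  have h1 : f z = F s := by
    simp only [hf]; rw [hz]; congr 1
    rw [← mul_assoc]; simp
  rw [← h1, hconst z 0, h0]

lemma deriv_zero_of_eqOn {f : ℝ → ℂ} {d : ℂ} {x : ℝ} (hx : x ∈ Ioo (0:ℝ) 1)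
    (h : ∀ y ∈ Ioo (0:ℝ) 1, f y = 0) (hd : HasDerivAt f d x) : d = 0 := by
  have h1 : f =ᶠ[𝓝 x] fun _ => 0 := by
    filter_upwards [Ioo_mem_nhds hx.1 hx.2] with y hy using h y hy
  exact hd.unique ((hasDerivAt_const x (0:ℂ)).congr_of_eventuallyEq h1)

theorem borg (q1 q2 : ℝ → ℝ) (hq1 : Continuous q1) (hq2 : Continuous q2)
    (f1 g1 f2 g2 : ℂ → ℝ → ℂ) (h1 : ∀ s, IsSol q1 s (f1 s) (g1 s)) (h2 : ∀ s, IsSol q2 s (f2 s) (g2 s))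
    (h10 : ∀ s, f1 s 0 = 0) (h11 : ∀ s, g1 s 0 = 1) (h20 : ∀ s, f2 s 0 = 0) (h21 : ∀ s, g2 s 0 = 1)
    (hG : ∀ s, f1 s 1 * g2 s 1 = f2 s 1 * g1 s 1) : ∀ x ∈ Ioo (0:ℝ) 1, q1 x = q2 x := by
  obtain ⟨P, hP1, hP2⟩ : ∃ P, (∀ x ∈ Icc (0:ℝ) 1, |q1 x| ≤ P) ∧ (∀ x ∈ Icc (0:ℝ) 1, |q2 x| ≤ P) := by
    obtain ⟨A, hA⟩ := isCompact_Icc.exists_bound_of_continuousOn (s := Icc (0:ℝ) 1) hq1.continuousOn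
    obtain ⟨B, hB⟩ := isCompact_Icc.exists_bound_of_continuousOn (s := Icc (0:ℝ) 1) hq2.continuousOn
    exact ⟨max A B, fun x hx => (hA x hx).trans (le_max_left _ _),
      fun x hx => (hB x hx).trans (le_max_right _ _)⟩
  have hP0 : 0 ≤ P := (abs_nonneg _).trans (hP1 0 ⟨le_rfl, zero_le_one⟩)
  set p1 : ℝ → ℝ := fun y => q1 (1 - y) with hp1
  set p2 : ℝ → ℝ := fun y => q2 (1 - y) with hp2
  have hp1c : Continuous p1 := by fun_prop
  have hp2c : Continuous p2 := by fun_prop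
  have hrefl : ∀ x ∈ Icc (0:ℝ) 1, 1 - x ∈ Icc (0:ℝ) 1 := fun x hx =>
    ⟨by linarith [hx.2], by linarith [hx.1]⟩
  have hPp1 : ∀ x ∈ Icc (0:ℝ) 1, |p1 x| ≤ P := fun x hx => hP1 _ (hrefl x hx)
  have hPp2 : ∀ x ∈ Icc (0:ℝ) 1, |p2 x| ≤ P := fun x hx => hP2 _ (hrefl x hx)
  obtain ⟨S1, S1', a1, a2, S10, S1'0, S1d, -⟩ := exists_sol p1 hp1c 0 1
  obtain ⟨C1, C1', a3, a4, C10, C1'0, C1d, -⟩ := exists_sol p1 hp1c 1 0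
  obtain ⟨S2, S2', b1, b2, S20, S2'0, S2d, -⟩ := exists_sol p2 hp2c 0 1
  obtain ⟨C2, C2', b3, b4, C20, C2'0, C2d, -⟩ := exists_sol p2 hp2c 1 0
  have hS1 : ∀ s, IsSol p1 s (S1 s) (S1' s) := fun s => ⟨a1 s, a2 s⟩
  have hC1 : ∀ s, IsSol p1 s (C1 s) (C1' s) := fun s => ⟨a3 s, a4 s⟩
  have hS2 : ∀ s, IsSol p2 s (S2 s) (S2' s) := fun s => ⟨b1 s, b2 s⟩
  have hC2 : ∀ s, IsSol p2 s (C2 s) (C2' s) := fun s => ⟨b3 s, b4 s⟩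
  have hW1 : ∀ s, ∀ y ∈ Icc (0:ℝ) 1, C1 s y * S1' s y - C1' s y * S1 s y = 1 := by
    intro s y hy
    rw [(hC1 s).wronskian (hS1 s) hy, C10, S1'0, C1'0, S10]; simp
  have hW2 : ∀ s, ∀ y ∈ Icc (0:ℝ) 1, C2 s y * S2' s y - C2' s y * S2 s y = 1 := by
    intro s y hy
    rw [(hC2 s).wronskian (hS2 s) hy, C20, S2'0, C2'0, S20]; simp
  have hexp1 : ∀ s, ∀ y ∈ Icc (0:ℝ) 1, f1 s (1 - y) = f1 s 1 * C1 s y - g1 s 1 * S1 s y := by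
    intro s y hy
    have e1 := (h1 s).reflect.wronskian (hS1 s) hy
    have e2 := (h1 s).reflect.wronskian (hC1 s) hy
    have e3 := hW1 s y hy
    simp only [S10, S1'0, C10, C1'0, sub_zero, mul_one, mul_zero] at e1 e2
    linear_combination C1 s y * e1 - S1 s y * e2 - f1 s (1 - y) * e3
  have hexp2 : ∀ s, ∀ y ∈ Icc (0:ℝ) 1, f2 s (1 - y) = f2 s 1 * C2 s y - g2 s 1 * S2 s y := by
    intro s y hy
    have e1 := (h2 s).reflect.wronskian (hS2 s) hy
    have e2 := (h2 s).reflect.wronskian (hC2 s) hy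
    have e3 := hW2 s y hy
    simp only [S20, S2'0, C20, C2'0, sub_zero, mul_one, mul_zero] at e1 e2
    linear_combination C2 s y * e1 - S2 s y * e2 - f2 s (1 - y) * e3
  have bS : ∀ (p : ℝ → ℝ) (hp : Continuous p) (hPp : ∀ x ∈ Icc (0:ℝ) 1, |p x| ≤ P) (Y D : ℝ → ℂ) (κ : ℂ)
      (hκ : 16 * P + 2 ≤ ‖κ‖) (h : IsSol p (κ^2) Y D) (h0 : Y 0 = 0) (h1 : D 0 = 1),
      ∀ y ∈ Icc (0:ℝ) 1, ‖κ‖ * ‖Y y‖ ≤ 2 * Real.exp (|κ.re| * y) := by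
    intro p hp hPp Y D κ hκ h h0 h1 y hy
    have := (h.bound hp hPp (by linarith) hy).1
    simpa [h0, h1] using this
  have bC : ∀ (p : ℝ → ℝ) (hp : Continuous p) (hPp : ∀ x ∈ Icc (0:ℝ) 1, |p x| ≤ P) (Y D : ℝ → ℂ) (κ : ℂ)
      (hκ : 16 * P + 2 ≤ ‖κ‖) (h : IsSol p (κ^2) Y D) (h0 : Y 0 = 1) (h1 : D 0 = 0),
      ∀ y ∈ Icc (0:ℝ) 1, ‖Y y‖ ≤ 2 * Real.exp (|κ.re| * y) := by
    intro p hp hPp Y D κ hκ h h0 h1 y hy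
    have := (h.bound hp hPp (by linarith) hy).1
    rw [h0, h1] at this
    simp only [norm_one, norm_zero, zero_add, mul_one] at this
    have hk : 0 < ‖κ‖ := by linarith
    refine le_of_mul_le_mul_left ?_ hk
    linarith
  have hF0 : ∀ y ∈ Icc (0:ℝ) 1, ∀ s, S1 s y * C2 s y - S2 s y * C1 s y = 0 := by
    intro y hy
    apply pl_vanish _ (((S1d y hy).mul (C2d y hy)).sub ((S2d y hy).mul (C1d y hy))) (16 * P + 2) 64
    · intro κ hκ
      have e1 := bS p1 hp1c hPp1 _ _ κ hκ (hS1 _) (S10 _) (S1'0 _) y hy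
      have e2 := bS p2 hp2c hPp2 _ _ κ hκ (hS2 _) (S20 _) (S2'0 _) y hy
      have e3 := bC p1 hp1c hPp1 _ _ κ hκ (hC1 _) (C10 _) (C1'0 _) y hy
      have e4 := bC p2 hp2c hPp2 _ _ κ hκ (hC2 _) (C20 _) (C2'0 _) y hy
      have hk : 1 ≤ ‖κ‖ := by linarith
      have hE : Real.exp (|κ.re| * y) ≤ Real.exp ‖κ‖ := by
        apply Real.exp_le_exp.2
        calc |κ.re| * y ≤ |κ.re| * 1 := by gcongr; exact hy.2
          _ ≤ ‖κ‖ := by rw [mul_one]; exact Complex.abs_re_le_norm κ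
      have e1' : ‖S1 (κ^2) y‖ ≤ 2 * Real.exp ‖κ‖ :=
        (le_mul_of_one_le_left (norm_nonneg _) hk).trans (e1.trans (by linarith))
      have e2' : ‖S2 (κ^2) y‖ ≤ 2 * Real.exp ‖κ‖ :=
        (le_mul_of_one_le_left (norm_nonneg _) hk).trans (e2.trans (by linarith))
      have e3' : ‖C1 (κ^2) y‖ ≤ 2 * Real.exp ‖κ‖ := e3.trans (by linarith)
      have e4' : ‖C2 (κ^2) y‖ ≤ 2 * Real.exp ‖κ‖ := e4.trans (by linarith)
      refine (norm_sub_le _ _).trans ?_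
      simp only [Pi.mul_apply, norm_mul]
      have hexp : Real.exp (2 * ‖κ‖) = Real.exp ‖κ‖ * Real.exp ‖κ‖ := by
        rw [← Real.exp_add]; ring_nf
      calc _ ≤ (2 * Real.exp ‖κ‖) * (2 * Real.exp ‖κ‖) + (2 * Real.exp ‖κ‖) * (2 * Real.exp ‖κ‖) := by
            gcongr
        _ = 8 * (Real.exp ‖κ‖ * Real.exp ‖κ‖) := by ring
        _ ≤ _ := by rw [hexp]; gcongr; norm_num
    · intro κ hκ hre
      have hk : 0 < ‖κ‖ := by linarith
      have hre0 : 1 ≤ κ.re := by linarith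
      have habs : |κ.re| = κ.re := abs_of_pos (by linarith)
      have e1 := bS p1 hp1c hPp1 _ _ κ hκ (hS1 _) (S10 _) (S1'0 _) y hy
      have e2 := bS p2 hp2c hPp2 _ _ κ hκ (hS2 _) (S20 _) (S2'0 _) y hy
      have e3 := bS q1 hq1 hP1 _ _ κ hκ (h1 _) (h10 _) (h11 _) (1 - y) (hrefl y hy)
      have e4 := bS q2 hq2 hP2 _ _ κ hκ (h2 _) (h20 _) (h21 _) (1 - y) (hrefl y hy)
      have l1 := (h1 (κ^2)).lower hq1 hP1 (by linarith) (h10 _) (h11 _) (x := 1) ⟨zero_le_one, le_rfl⟩ (by linarith)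
      have l2 := (h2 (κ^2)).lower hq2 hP2 (by linarith) (h20 _) (h21 _) (x := 1) ⟨zero_le_one, le_rfl⟩ (by linarith)
      rw [habs] at e1 e2 e3 e4
      rw [mul_one] at l1 l2
      have hE : Real.exp (κ.re * y) * Real.exp (κ.re * (1 - y)) = Real.exp κ.re := by
        rw [← Real.exp_add]; ring_nf
      have key : ∀ a b c : ℝ, 0 ≤ a → 0 ≤ b → ‖κ‖ * a ≤ 2 * Real.exp (κ.re * y) →
          ‖κ‖ * b ≤ 2 * Real.exp (κ.re * (1 - y)) → Real.exp κ.re / 8 ≤ ‖κ‖ * c →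
          ‖κ‖ * (a * b) ≤ 32 * c := by
        intro a b c ha hb h1 h2 h3
        refine le_of_mul_le_mul_left ?_ hk
        calc ‖κ‖ * (‖κ‖ * (a * b)) = (‖κ‖ * a) * (‖κ‖ * b) := by ring
          _ ≤ (2 * Real.exp (κ.re * y)) * (2 * Real.exp (κ.re * (1 - y))) := by gcongr
          _ = 4 * Real.exp κ.re := by rw [← hE]; ring
          _ ≤ _ := by linarith
      have k1 := key _ _ _ (norm_nonneg _) (norm_nonneg _) e1 e4 l2
      have k2 := key _ _ _ (norm_nonneg _) (norm_nonneg _) e2 e3 l1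
      have pos1 : 0 < ‖f1 (κ^2) 1‖ := by
        have : 0 < ‖κ‖ * ‖f1 (κ^2) 1‖ := lt_of_lt_of_le (by positivity) l1
        exact pos_of_mul_pos_right this hk.le
      have pos2 : 0 < ‖f2 (κ^2) 1‖ := by
        have : 0 < ‖κ‖ * ‖f2 (κ^2) 1‖ := lt_of_lt_of_le (by positivity) l2
        exact pos_of_mul_pos_right this hk.le
      have hid : f1 (κ^2) 1 * f2 (κ^2) 1 * (S1 (κ^2) y * C2 (κ^2) y - S2 (κ^2) y * C1 (κ^2) y) =
          f1 (κ^2) 1 * (S1 (κ^2) y * f2 (κ^2) (1 - y)) - f2 (κ^2) 1 * (S2 (κ^2) y * f1 (κ^2) (1 - y)) := by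
        rw [hexp1 _ y hy, hexp2 _ y hy]
        linear_combination S1 (κ^2) y * S2 (κ^2) y * hG (κ^2)
      have hnorm := congrArg norm hid
      rw [norm_mul, norm_mul] at hnorm
      have hle := norm_sub_le (f1 (κ^2) 1 * (S1 (κ^2) y * f2 (κ^2) (1 - y)))
        (f2 (κ^2) 1 * (S2 (κ^2) y * f1 (κ^2) (1 - y)))
      rw [← hnorm] at hle
      simp only [norm_mul] at hle
      refine le_of_mul_le_mul_left ?_ (mul_pos pos1 pos2)
      calc _ = ‖κ‖ * (‖f1 (κ^2) 1‖ * ‖f2 (κ^2) 1‖ *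
            ‖S1 (κ^2) y * C2 (κ^2) y - S2 (κ^2) y * C1 (κ^2) y‖) := by
              simp only [Pi.sub_apply, Pi.mul_apply]; ring
        _ ≤ ‖κ‖ * (‖f1 (κ^2) 1‖ * (‖S1 (κ^2) y‖ * ‖f2 (κ^2) (1 - y)‖) +
            ‖f2 (κ^2) 1‖ * (‖S2 (κ^2) y‖ * ‖f1 (κ^2) (1 - y)‖)) := by gcongr
        _ = ‖f1 (κ^2) 1‖ * (‖κ‖ * (‖S1 (κ^2) y‖ * ‖f2 (κ^2) (1 - y)‖)) +
            ‖f2 (κ^2) 1‖ * (‖κ‖ * (‖S2 (κ^2) y‖ * ‖f1 (κ^2) (1 - y)‖)) := by ring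
        _ ≤ ‖f1 (κ^2) 1‖ * (32 * ‖f2 (κ^2) 1‖) + ‖f2 (κ^2) 1‖ * (32 * ‖f1 (κ^2) 1‖) := by gcongr
        _ = _ := by ring
  have hfin : ∀ y ∈ Ioo (0:ℝ) 1, p1 y = p2 y := by
    intro y hy
    obtain ⟨r, hr1, hr2⟩ : ∃ r : ℝ, 16 * P + 2 ≤ r ∧ 1 / y ≤ r :=
      ⟨max (16 * P + 2) (1 / y), le_max_left _ _, le_max_right _ _⟩
    have hr0 : 0 < r := by linarith
    have hnr : ‖(r:ℂ)‖ = r := by simp [abs_of_pos hr0]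
    set s : ℂ := (r:ℂ) ^ 2 with hs
    have hne : S1 s y ≠ 0 := by
      have l := (hS1 ((r:ℂ)^2)).lower hp1c hPp1 (by rw [hnr]; linarith) (S10 _) (S1'0 _) (x := y)
        ⟨hy.1.le, hy.2.le⟩ (by
          rw [Complex.ofReal_re]
          rwa [div_le_iff₀ hy.1] at hr2)
      intro h0
      rw [← hs, h0, norm_zero, mul_zero] at l
      have := Real.exp_pos ((r:ℂ).re * y)
      linarith
    have hIcc : ∀ x ∈ Ioo (0:ℝ) 1, x ∈ Icc (0:ℝ) 1 := fun x hx => ⟨hx.1.le, hx.2.le⟩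
    have d1 : ∀ x ∈ Ioo (0:ℝ) 1, S1' s x * C2 s x + S1 s x * C2' s x
        - (S2' s x * C1 s x + S2 s x * C1' s x) = 0 := by
      intro x hx
      exact deriv_zero_of_eqOn hx (fun y hy => hF0 y (hIcc y hy) s)
        (((a1 s x).mul (b3 s x)).sub ((b1 s x).mul (a3 s x)))
    have sq : ∀ x ∈ Ioo (0:ℝ) 1, S1 s x * S1 s x - S2 s x * S2 s x = 0 := by
      intro x hx
      have e0 := hF0 x (hIcc x hx) s
      have e1 := d1 x hx
      have w1 := hW1 s x (hIcc x hx)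
      have w2 := hW2 s x (hIcc x hx)
      linear_combination (-(S1 s x)^2) * w2 + (S2 s x)^2 * w1 + (S1 s x * S2' s x) * e0 +
        (S2 s x * S1' s x) * e0 - S1 s x * S2 s x * e1
    have d2 : ∀ x ∈ Ioo (0:ℝ) 1, S1' s x * S1 s x + S1 s x * S1' s x
        - (S2' s x * S2 s x + S2 s x * S2' s x) = 0 := by
      intro x hx
      exact deriv_zero_of_eqOn hx sq
        (((a1 s x).mul (a1 s x)).sub ((b1 s x).mul (b1 s x)))
    have d3 := deriv_zero_of_eqOn hy d2
      ((((a2 s y (hIcc y hy)).mul (a1 s y)).add ((a1 s y).mul (a2 s y (hIcc y hy)))).sub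
       (((b2 s y (hIcc y hy)).mul (b1 s y)).add ((b1 s y).mul (b2 s y (hIcc y hy)))))
    have e1 := sq y hy
    have e2 := d2 y hy
    have hsq2 : S1 s y * S1 s y ≠ 0 := mul_ne_zero hne hne
    have e3 : S1' s y * S1' s y = S2' s y * S2' s y := by
      have : S1 s y * S1 s y * (S1' s y * S1' s y - S2' s y * S2' s y) = 0 := by
        linear_combination (1/2) * (S1 s y * S1' s y + S2 s y * S2' s y) * e2 - (S2' s y)^2 * e1
      rcases mul_eq_zero.1 this with h | h
      · exact absurd h hsq2
      · exact sub_eq_zero.1 h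
    have e4 : S1 s y * S1 s y * ((p1 y : ℂ) - p2 y) = 0 := by
      linear_combination (1/2) * d3 - e3 - (p2 y + s) * e1
    rcases mul_eq_zero.1 e4 with h | h
    · exact absurd h hsq2
    · exact_mod_cast sub_eq_zero.1 h
  intro x hx
  have := hfin (1 - x) ⟨by linarith [hx.2], by linarith [hx.1]⟩
  simpa [hp1, hp2] using this

end HeatInv


namespace HeatInv
open Set MeasureTheory Filter Topology

lemma second_deriv_nonpos {f f' : ℝ → ℝ} {x0 d : ℝ} (hx0 : x0 ∈ Ioo (0:ℝ) 1)
    (hmax : ∀ x ∈ Icc (0:ℝ) 1, f x ≤ f x0) (hf : ∀ x ∈ Icc (0:ℝ) 1, HasDerivAt f (f' x) x)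
    (hf' : HasDerivAt f' d x0) : d ≤ 0 := by
  by_contra hd
  push Not at hd
  have hnh : Ioo (0:ℝ) 1 ∈ 𝓝 x0 := Ioo_mem_nhds hx0.1 hx0.2
  have hI : ∀ x ∈ Ioo (0:ℝ) 1, x ∈ Icc (0:ℝ) 1 := fun x hx => ⟨hx.1.le, hx.2.le⟩
  have hlm : IsLocalMax f x0 := by
    filter_upwards [hnh] with x hx using hmax x (hI x hx)
  have hde : deriv f =ᶠ[𝓝 x0] f' := by
    filter_upwards [hnh] with x hx using (hf x (hI x hx)).deriv
  have hdd : deriv (deriv f) x0 = d := by rw [hde.deriv_eq]; exact hf'.deriv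
  have hmin : IsLocalMin f x0 := isLocalMin_of_deriv_deriv_pos (by rw [hdd]; exact hd)
    hlm.deriv_eq_zero (hf x0 (hI x0 hx0)).continuousAt
  have hconst : f =ᶠ[𝓝 x0] fun _ => f x0 := by
    filter_upwards [hlm, hmin] with x h1 h2 using le_antisymm h1 h2
  have h1 : deriv f =ᶠ[𝓝 x0] deriv (fun _ => f x0) := hconst.deriv
  have h2 := h1.deriv_eq
  simp at h2
  rw [hdd] at h2
  linarith

lemma left_deriv_nonneg {f : ℝ → ℝ} {a t0 d : ℝ} (ha : a < t0)
    (hmax : ∀ t ∈ Icc a t0, f t ≤ f t0) (hf : HasDerivAt f d t0) : 0 ≤ d := by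
  have h1 := hf.hasDerivWithinAt (s := Iio t0)
  rw [hasDerivWithinAt_iff_tendsto_slope' (by simp)] at h1
  refine ge_of_tendsto h1 ?_
  filter_upwards [Ioo_mem_nhdsLT ha] with t ht
  rw [slope_def_field]
  exact div_nonneg_of_nonpos (by linarith [hmax t ⟨ht.1.le, ht.2.le⟩]) (by linarith [ht.2])

lemma barrier {q a : ℝ → ℝ} {u ux uxx ut : ℝ → ℝ → ℝ} (hq : Continuous q)
    (hu : IsHeatSolution q a u ux uxx ut) {α : ℝ} (hα : 0 < α) :
    ∃ C : ℝ, ∀ t ∈ Icc α (α + 1), ∀ x ∈ Icc (0:ℝ) 1, u x t - u x α ≤ C * (t - α) := by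
  obtain ⟨hc, hx, hxx, hxxc, ht, htc, heq, h0, hbd⟩ := hu
  have huα : ContinuousOn (fun x => u x α) (Icc 0 1) :=
    hc.comp (f := fun x : ℝ => (x, α)) (by fun_prop) (fun x hx => ⟨hx, hα.le⟩)
  obtain ⟨Q, hQ⟩ := isCompact_Icc.exists_bound_of_continuousOn (s := Icc (0:ℝ) 1) hq.continuousOn
  obtain ⟨n, hn⟩ := isCompact_Icc.exists_bound_of_continuousOn (s := Icc (0:ℝ) 1)
    ((hxxc α hα).sub (hq.continuousOn.mul huα))
  have h1mem : (1:ℝ) ∈ Icc (0:ℝ) 1 := ⟨zero_le_one, le_rfl⟩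
  obtain ⟨M, hM⟩ := isCompact_Icc.exists_bound_of_continuousOn (s := Icc α (α+1))
    ((htc 1 h1mem).mono (fun t ht => lt_of_lt_of_le hα ht.1))
  have hQ0 : 0 ≤ Q := (norm_nonneg _).trans (hQ 1 h1mem)
  have hn0 : 0 ≤ n := (norm_nonneg _).trans (hn 1 h1mem)
  have hM0 : 0 ≤ M := (norm_nonneg _).trans (hM α ⟨le_rfl, by linarith⟩)
  set C := n + M + 1 with hC
  set l := Q + 1 with hl
  have hz : ∀ p ∈ Icc (0:ℝ) 1 ×ˢ Icc α (α+1),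
      Real.exp (-l * (p.2 - α)) * (u p.1 p.2 - u p.1 α) - C * (p.2 - α) ≤ 0 := by
    have hcont : ContinuousOn (fun p : ℝ × ℝ =>
        Real.exp (-l * (p.2 - α)) * (u p.1 p.2 - u p.1 α) - C * (p.2 - α))
        (Icc (0:ℝ) 1 ×ˢ Icc α (α+1)) := by
      have c1 : ContinuousOn (fun p : ℝ × ℝ => u p.1 p.2) (Icc (0:ℝ) 1 ×ˢ Icc α (α+1)) :=
        hc.mono (prod_mono subset_rfl (fun t ht => hα.le.trans ht.1))
      have c2 : ContinuousOn (fun p : ℝ × ℝ => u p.1 α) (Icc (0:ℝ) 1 ×ˢ Icc α (α+1)) :=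
        huα.comp continuous_fst.continuousOn (fun p hp => hp.1)
      exact ((by fun_prop : Continuous fun p : ℝ × ℝ => Real.exp (-l * (p.2 - α))).continuousOn.mul
        (c1.sub c2)).sub (by fun_prop : Continuous fun p : ℝ × ℝ => C * (p.2 - α)).continuousOn
    obtain ⟨⟨x0, t0⟩, ⟨hx0, ht0⟩, hmax⟩ := (isCompact_Icc.prod isCompact_Icc).exists_isMaxOn
      (⟨((0:ℝ), α), ⟨le_rfl, zero_le_one⟩, ⟨le_rfl, by simp⟩⟩ : (Icc (0:ℝ) 1 ×ˢ Icc α (α+1)).Nonempty) hcont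
    simp only at hx0 ht0
    by_contra hcon
    push Not at hcon
    obtain ⟨p, hp, hpz⟩ := hcon
    have hpos : 0 < Real.exp (-l * (t0 - α)) * (u x0 t0 - u x0 α) - C * (t0 - α) :=
      lt_of_lt_of_le hpz (hmax hp)
    have hmax' : ∀ x ∈ Icc (0:ℝ) 1, ∀ t ∈ Icc α (α+1),
      Real.exp (-l * (t - α)) * (u x t - u x α) - C * (t - α) ≤
      Real.exp (-l * (t0 - α)) * (u x0 t0 - u x0 α) - C * (t0 - α) :=
      fun x hx t ht => hmax (⟨hx, ht⟩ : (x, t) ∈ Icc (0:ℝ) 1 ×ˢ Icc α (α+1))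
    have htα : α < t0 := by
      rcases ht0.1.eq_or_lt with h | h
      · rw [← h] at hpos; simp at hpos
      · exact h
    have ht0pos : 0 < t0 := hα.trans htα
    have hτ : 0 < t0 - α := by linarith
    have hexp0 := Real.exp_pos (-l * (t0 - α))
    have hexp1 : Real.exp (-l * (t0 - α)) ≤ 1 := Real.exp_le_one_iff.2 (by nlinarith)
    set e := Real.exp (-l * (t0 - α)) with he
    have hCτ : 0 < C * (t0 - α) := by positivity
    have hv : 0 < u x0 t0 - u x0 α := by
      by_contra hv
      push Not at hv
      have := mul_nonpos_of_nonneg_of_nonpos hexp0.le hv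
      linarith
    have hxa : x0 ≠ 0 := by
      intro h
      rw [h, (hbd t0 ht0pos).1, (hbd α hα).1] at hv
      simp at hv
    have hxb : x0 ≠ 1 := by
      intro h
      rw [h] at hv hpos
      have hmv : ‖u 1 t0 - u 1 α‖ ≤ M * ‖t0 - α‖ := by
        apply Convex.norm_image_sub_le_of_norm_hasDerivWithin_le (s := Icc α (α+1)) (f' := ut 1)
          (fun t htt => (ht 1 h1mem t (lt_of_lt_of_le hα htt.1)).hasDerivWithinAt) hM
          (convex_Icc _ _) ⟨le_rfl, by linarith⟩ ht0
      rw [Real.norm_eq_abs, Real.norm_eq_abs, abs_of_pos hv, abs_of_pos hτ] at hmv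
      have : e * (u 1 t0 - u 1 α) ≤ 1 * (u 1 t0 - u 1 α) := by gcongr
      nlinarith
    have hx0' : x0 ∈ Ioo (0:ℝ) 1 := ⟨lt_of_le_of_ne hx0.1 (Ne.symm hxa), lt_of_le_of_ne hx0.2 hxb⟩
    have hA : uxx x0 t0 - uxx x0 α ≤ 0 := by
      apply second_deriv_nonpos (f := fun x => u x t0 - u x α) (f' := fun x => ux x t0 - ux x α) hx0'
      · intro x hx
        have := hmax' x hx t0 ht0
        exact le_of_mul_le_mul_left (by linarith) hexp0
      · intro x hx1
        exact (hx t0 ht0pos x hx1).sub (hx α hα x hx1)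
      · exact (hxx t0 ht0pos x0 hx0).sub (hxx α hα x0 hx0)
    have hB : 0 ≤ (e * (-l)) * (u x0 t0 - u x0 α) + e * ut x0 t0 - C := by
      apply left_deriv_nonneg htα
        (f := fun t => Real.exp (-l * (t - α)) * (u x0 t - u x0 α) - C * (t - α))
      · intro t htt
        exact hmax' x0 hx0 t ⟨htt.1, htt.2.trans ht0.2⟩
      · have d0 : HasDerivAt (fun t : ℝ => t - α) 1 t0 := (hasDerivAt_id t0).sub_const α
        have d1 := (d0.const_mul (-l)).exp
        have d2 := (ht x0 hx0 t0 ht0pos).sub_const (u x0 α)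
        exact ((d1.mul d2).sub (d0.const_mul C)).congr_deriv (by simp only [he]; ring)
    have hut := heq x0 hx0' t0 ht0pos
    have hg := (abs_le.1 (hn x0 hx0)).2
    have hqx := abs_le.1 (hQ x0 hx0)
    have hle : ut x0 t0 ≤ Q * (u x0 t0 - u x0 α) + n := by
      simp only [Pi.sub_apply, Pi.mul_apply] at hg
      have : 0 ≤ (Q + q x0) * (u x0 t0 - u x0 α) := mul_nonneg (by linarith [hqx.1]) hv.le
      rw [hut]
      nlinarith
    have h3 : e * ut x0 t0 ≤ e * (Q * (u x0 t0 - u x0 α) + n) := by gcongr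
    have h4 : e * n ≤ n := mul_le_of_le_one_left hn0 hexp1
    have h5 : 0 < e * (u x0 t0 - u x0 α) := mul_pos hexp0 hv
    rw [hl] at hB
    nlinarith
  refine ⟨C * Real.exp l, fun t ht x hx => ?_⟩
  have h1 := hz (x, t) ⟨hx, ht⟩
  simp only at h1
  have hτ0 : 0 ≤ t - α := by linarith [ht.1]
  have hτ1 : t - α ≤ 1 := by linarith [ht.2]
  have hC0 : 0 ≤ C := by positivity
  calc u x t - u x α = Real.exp (l * (t - α)) * (Real.exp (-l * (t - α)) * (u x t - u x α)) := by
        rw [← mul_assoc, ← Real.exp_add]; simp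
    _ ≤ Real.exp (l * (t - α)) * (C * (t - α)) :=
        mul_le_mul_of_nonneg_left (by linarith) (Real.exp_pos _).le
    _ ≤ Real.exp l * (C * (t - α)) := by
        gcongr
        exact mul_le_of_le_one_right (by positivity) hτ1
    _ = _ := by ring

lemma neg_sol {q a : ℝ → ℝ} {u ux uxx ut : ℝ → ℝ → ℝ} (hu : IsHeatSolution q a u ux uxx ut) :
    IsHeatSolution q (fun t => - a t) (fun x t => - u x t) (fun x t => - ux x t)
      (fun x t => - uxx x t) (fun x t => - ut x t) := by
  obtain ⟨hc, hx, hxx, hxxc, ht, htc, heq, h0, hbd⟩ := hu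
  refine ⟨hc.neg, fun t ht x hx1 => (hx t ht x hx1).neg, fun t ht x hx1 => (hxx t ht x hx1).neg,
    fun t ht => (hxxc t ht).neg, fun x hx1 t ht1 => (ht x hx1 t ht1).neg, fun x hx1 => (htc x hx1).neg,
    ?_, ?_, ?_⟩
  · intro x hx1 t ht1
    simp only [heq x hx1 t ht1]; ring
  · intro x hx1; simp [h0 x hx1]
  · intro t ht1; simp [hbd t ht1]

lemma barrier_abs {q a : ℝ → ℝ} {u ux uxx ut : ℝ → ℝ → ℝ} (hq : Continuous q)
    (hu : IsHeatSolution q a u ux uxx ut) {α : ℝ} (hα : 0 < α) :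
    ∃ C : ℝ, ∀ t ∈ Icc α (α + 1), ∀ x ∈ Icc (0:ℝ) 1, |u x t - u x α| ≤ C * (t - α) := by
  obtain ⟨C1, h1⟩ := barrier hq hu hα
  obtain ⟨C2, h2⟩ := barrier hq (neg_sol hu) hα
  refine ⟨max C1 C2, fun t ht x hx => abs_le.2 ⟨?_, ?_⟩⟩
  · have := h2 t ht x hx
    have h3 : C2 * (t - α) ≤ max C1 C2 * (t - α) :=
      mul_le_mul_of_nonneg_right (le_max_right _ _) (by linarith [ht.1])
    linarith
  · have := h1 t ht x hx
    have h3 : C1 * (t - α) ≤ max C1 C2 * (t - α) :=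
      mul_le_mul_of_nonneg_right (le_max_left _ _) (by linarith [ht.1])
    linarith

end HeatInv


namespace HeatInv
open Set MeasureTheory Filter Topology

section
variable {q a : ℝ → ℝ} {u ux uxx ut : ℝ → ℝ → ℝ}

lemma slice_x (hu : IsHeatSolution q a u ux uxx ut) {t : ℝ} (ht : 0 ≤ t) :
    ContinuousOn (fun x => u x t) (Icc 0 1) :=
  hu.1.comp (f := fun x : ℝ => (x, t)) (by fun_prop) (fun x hx => ⟨hx, ht⟩)

lemma slice_t (hu : IsHeatSolution q a u ux uxx ut) {x : ℝ} (hx : x ∈ Icc (0:ℝ) 1) :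
    ContinuousOn (fun t => u x t) (Ici 0) :=
  hu.1.comp (f := fun t : ℝ => (x, t)) (by fun_prop) (fun t ht => ⟨hx, ht⟩)

lemma flux_aesm (hu : IsHeatSolution q a u ux uxx ut) (N : ℝ) :
    AEStronglyMeasurable (fun t => ux 1 t) (volume.restrict (Ioc 0 N)) := by
  have h1 : (1:ℝ) ∈ Icc (0:ℝ) 1 := ⟨zero_le_one, le_rfl⟩
  refine aestronglyMeasurable_of_tendsto_ae atTop
    (f := fun (n : ℕ) t => slope (fun y => u y t) 1 (1 - 1 / ((n:ℝ) + 1))) ?_ ?_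
  · intro n
    have hn : (1 - 1 / ((n:ℝ) + 1)) ∈ Icc (0:ℝ) 1 := by
      have h : 1 / ((n:ℝ) + 1) ≤ 1 := by
        rw [div_le_one (by positivity)]; linarith [(Nat.cast_nonneg n : (0:ℝ) ≤ n)]
      have h' : 0 ≤ 1 / ((n:ℝ) + 1) := by positivity
      constructor <;> linarith
    refine ContinuousOn.aestronglyMeasurable ?_ measurableSet_Ioc
    simp only [slope_def_field]
    have hs : Ioc 0 N ⊆ Ici (0:ℝ) := fun t ht => ht.1.le
    exact (((slice_t hu hn).mono hs).sub ((slice_t hu h1).mono hs)).div_const _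
  · refine ae_restrict_of_forall_mem measurableSet_Ioc fun t ht => ?_
    have h := hasDerivAt_iff_tendsto_slope.1 (hu.2.1 t ht.1 1 h1)
    refine h.comp (tendsto_nhdsWithin_iff.2 ⟨?_, ?_⟩)
    · have := (tendsto_one_div_add_atTop_nhds_zero_nat (𝕜 := ℝ)).const_sub 1
      simpa using this
    · filter_upwards with n
      have : (0:ℝ) < 1 / ((n:ℝ) + 1) := by positivity
      simp only [mem_compl_iff, mem_singleton_iff]
      intro h; linarith

lemma flux_int (hu : IsHeatSolution q a u ux uxx ut) {C c : ℝ} (hc : 0 < c) (hb : HeatGrowthBound u ux C c)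
    (s : ℝ) {N : ℝ} (hN : 0 < N) :
    IntervalIntegrable (fun t : ℝ => Complex.exp (-s * t) * (ux 1 t : ℂ)) volume 0 N := by
  have h1 : (1:ℝ) ∈ Icc (0:ℝ) 1 := ⟨zero_le_one, le_rfl⟩
  have hC : 0 ≤ C := by
    have := hb 1 h1 0 (by simp)
    simp at this
    exact (by positivity : 0 ≤ |u 1 0| + |ux 1 0|).trans this
  have hux : IntervalIntegrable (fun t : ℝ => (ux 1 t : ℂ)) volume 0 N := by
    rw [intervalIntegrable_iff_integrableOn_Ioc_of_le hN.le]
    refine IntegrableOn.of_bound (by simp) (Complex.continuous_ofReal.comp_aestronglyMeasurable (flux_aesm hu N))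
      (C * Real.exp (c * N)) ?_
    refine ae_restrict_of_forall_mem measurableSet_Ioc fun t ht => ?_
    have h := hb 1 h1 t ht.1.le
    have h2 : C * Real.exp (c * t) ≤ C * Real.exp (c * N) := by
      gcongr; exact ht.2
    simp only [Complex.norm_real, Real.norm_eq_abs]
    linarith [abs_nonneg (u 1 t)]
  exact hux.continuousOn_mul (by fun_prop)

lemma pulse_int (hu : IsHeatSolution q a u ux uxx ut) (s : ℝ) {N : ℝ} (hN : 0 < N) :
    IntervalIntegrable (fun t : ℝ => Complex.exp (-s * t) * (a t : ℂ)) volume 0 N := by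
  have h1 : (1:ℝ) ∈ Icc (0:ℝ) 1 := ⟨zero_le_one, le_rfl⟩
  have h2 : ContinuousOn (fun t : ℝ => Complex.exp (-s * t) * (u 1 t : ℂ)) (uIcc 0 N) := by
    rw [uIcc_of_le hN.le]
    refine ContinuousOn.mul (by fun_prop) ?_
    exact Complex.continuous_ofReal.comp_continuousOn
      ((slice_t hu h1).mono (fun t ht => ht.1))
  refine h2.intervalIntegrable.congr_ae ?_
  rw [uIoc_of_le hN.le]
  refine ae_restrict_of_forall_mem measurableSet_Ioc fun t ht => ?_
  simp only [(hu.2.2.2.2.2.2.2.2 t ht.1).2]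

lemma phi_cont (hu : IsHeatSolution q a u ux uxx ut) {C c : ℝ} (hc : 0 < c)
    (hb : HeatGrowthBound u ux C c) {φ : ℝ → ℂ} (hφ : Continuous φ) {N : ℝ} :
    ContinuousOn (fun t => ∫ x in (0:ℝ)..1, φ x * (u x t : ℂ)) (Icc 0 N) := by
  intro t ht
  have h01 : (0:ℝ) ≤ 1 := zero_le_one
  have hu01 : uIoc (0:ℝ) 1 ⊆ Icc 0 1 := by rw [uIoc_of_le h01]; exact Ioc_subset_Icc_self
  have hC : 0 ≤ C := by
    have := hb 1 ⟨zero_le_one, le_rfl⟩ 0 (by simp)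
    simp at this
    exact (by positivity : 0 ≤ |u 1 0| + |ux 1 0|).trans this
  refine intervalIntegral.continuousWithinAt_of_dominated_interval
    (bound := fun x => ‖φ x‖ * (C * Real.exp (c * N))) ?_ ?_ ?_ ?_
  · filter_upwards [self_mem_nhdsWithin] with r hr
    refine ContinuousOn.aestronglyMeasurable ?_ measurableSet_uIoc
    exact hφ.continuousOn.mul (Complex.continuous_ofReal.comp_continuousOn
      ((slice_x hu hr.1).mono hu01))
  · filter_upwards [self_mem_nhdsWithin] with r hr
    filter_upwards with x hx
    have h := hb x (hu01 hx) r hr.1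
    have h2 : C * Real.exp (c * r) ≤ C * Real.exp (c * N) := by
      gcongr; exact hr.2
    rw [norm_mul, Complex.norm_real, Real.norm_eq_abs]
    gcongr
    linarith [abs_nonneg (ux x r)]
  · exact (by fun_prop : Continuous _).intervalIntegrable _ _
  · filter_upwards with x hx
    refine ContinuousWithinAt.mul continuousWithinAt_const ?_
    exact Complex.continuous_ofReal.continuousAt.comp_continuousWithinAt
      (((slice_t hu (hu01 hx)).mono (fun t ht => ht.1)) t ht)

lemma phi_deriv (hq : Continuous q) (hu : IsHeatSolution q a u ux uxx ut) {φ : ℝ → ℂ}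
    (hφ : Continuous φ) {t : ℝ} (ht : 0 < t) :
    HasDerivWithinAt (fun t => ∫ x in (0:ℝ)..1, φ x * (u x t : ℂ))
      (∫ x in (0:ℝ)..1, φ x * (ut x t : ℂ)) (Ioi t) t := by
  have h01 : (0:ℝ) ≤ 1 := zero_le_one
  have hu01 : uIoc (0:ℝ) 1 ⊆ Icc 0 1 := by rw [uIoc_of_le h01]; exact Ioc_subset_Icc_self
  obtain ⟨K, hK⟩ := barrier_abs hq hu ht
  have hcx : ∀ r, 0 ≤ r → ContinuousOn (fun x => φ x * (u x r : ℂ)) (Icc 0 1) := fun r hr =>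
    hφ.continuousOn.mul (Complex.continuous_ofReal.comp_continuousOn (slice_x hu hr))
  have hii : ∀ r, 0 ≤ r → IntervalIntegrable (fun x => φ x * (u x r : ℂ)) volume 0 1 := fun r hr =>
    ContinuousOn.intervalIntegrable (by rw [uIcc_of_le h01]; exact hcx r hr)
  rw [hasDerivWithinAt_iff_tendsto_slope' (by simp)]
  have hmain : Tendsto (fun r => ∫ x in (0:ℝ)..1, φ x * ((slope (fun r => u x r) t r : ℝ) : ℂ)) (𝓝[>] t)
      (𝓝 (∫ x in (0:ℝ)..1, φ x * (ut x t : ℂ))) := by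
    refine intervalIntegral.tendsto_integral_filter_of_dominated_convergence
      (fun x => ‖φ x‖ * K) ?_ ?_ ?_ ?_
    · filter_upwards [self_mem_nhdsWithin] with r hr
      refine ContinuousOn.aestronglyMeasurable ?_ measurableSet_uIoc
      simp only [slope_def_field]
      refine hφ.continuousOn.mul (Complex.continuous_ofReal.comp_continuousOn ?_)
      exact (((slice_x hu (ht.trans hr).le).mono hu01).sub
        ((slice_x hu ht.le).mono hu01)).div_const _
    · filter_upwards [Ioo_mem_nhdsGT (by linarith : t < t + 1)] with r hr
      filter_upwards with x hx
      have h := hK r ⟨hr.1.le, hr.2.le⟩ x (hu01 hx)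
      have hp : 0 < r - t := by linarith [hr.1]
      rw [norm_mul, Complex.norm_real, Real.norm_eq_abs, slope_def_field, abs_div, abs_of_pos hp]
      gcongr
      rw [div_le_iff₀ hp]; exact h
    · exact (by fun_prop : Continuous _).intervalIntegrable _ _
    · filter_upwards with x hx
      refine Tendsto.const_mul _ ?_
      refine (Complex.continuous_ofReal.tendsto _).comp ?_
      exact (hasDerivWithinAt_iff_tendsto_slope' (by simp)).1
        ((hu.2.2.2.2.1 x (hu01 hx) t ht).hasDerivWithinAt)
  refine hmain.congr' ?_
  filter_upwards [self_mem_nhdsWithin] with r hr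
  have hr' : t < r := hr
  rw [slope_def_module, ← intervalIntegral.integral_sub (hii r (by linarith)) (hii t ht.le),
    ← intervalIntegral.integral_smul]
  congr 1
  funext x
  rw [slope_def_field, Complex.real_smul]
  push_cast
  rw [div_eq_inv_mul]
  ring

lemma phi_rhs (hq : Continuous q) (hu : IsHeatSolution q a u ux uxx ut) {s : ℂ} {φ D : ℝ → ℂ}
    (hφ : IsSol q s φ D) (h0 : φ 0 = 0) {t : ℝ} (ht : 0 < t) :
    (∫ x in (0:ℝ)..1, φ x * (ut x t : ℂ)) =
      φ 1 * ux 1 t - D 1 * a t + s * ∫ x in (0:ℝ)..1, φ x * (u x t : ℂ) := by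
  have h01 : (0:ℝ) ≤ 1 := zero_le_one
  obtain ⟨hc, hx, hxx, hxxc, htt, htc, heq, hi, hbd⟩ := id hu
  have hcu : ContinuousOn (fun x => (u x t : ℂ)) (Icc 0 1) :=
    Complex.continuous_ofReal.comp_continuousOn (slice_x hu ht.le)
  have hcuxx : ContinuousOn (fun x => (uxx x t : ℂ)) (Icc 0 1) :=
    Complex.continuous_ofReal.comp_continuousOn (hxxc t ht)
  have hcq : Continuous (fun x => (q x : ℂ)) := Complex.continuous_ofReal.comp hq
  have hφc := hφ.contY
  have hd : ∀ x ∈ uIcc (0:ℝ) 1, HasDerivAt (fun x => φ x * (ux x t : ℂ) - D x * (u x t : ℂ))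
      (φ x * (uxx x t : ℂ) - (q x + s) * φ x * (u x t : ℂ)) x := by
    intro x hx1
    rw [uIcc_of_le h01] at hx1
    have e1 := (hx t ht x hx1).ofReal_comp
    have e2 := (hxx t ht x hx1).ofReal_comp
    exact (((hφ.1 x).mul e2).sub ((hφ.2 x hx1).mul e1)).congr_deriv (by ring)
  have hcont : ContinuousOn (fun x => φ x * (uxx x t : ℂ) - (q x + s) * φ x * (u x t : ℂ)) (uIcc 0 1) := by
    rw [uIcc_of_le h01]
    exact (hφc.continuousOn.mul hcuxx).sub
      (((hcq.add continuous_const).mul hφc).continuousOn.mul hcu)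
  have hftc := intervalIntegral.integral_eq_sub_of_hasDerivAt hd hcont.intervalIntegrable
  rw [h0, (hbd t ht).1, (hbd t ht).2] at hftc
  have hiu : IntervalIntegrable (fun x => s * (φ x * (u x t : ℂ))) volume 0 1 := by
    refine ContinuousOn.intervalIntegrable ?_
    rw [uIcc_of_le h01]
    exact continuousOn_const.mul (hφc.continuousOn.mul hcu)
  have e : (∫ x in (0:ℝ)..1, φ x * (ut x t : ℂ)) =
      ∫ x in (0:ℝ)..1, ((φ x * (uxx x t : ℂ) - (q x + s) * φ x * (u x t : ℂ)) + s * (φ x * (u x t : ℂ))) := by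
    refine intervalIntegral.integral_congr_Ioo_of_le h01 fun x hx1 => ?_
    simp only [heq x hx1 t ht]
    push_cast
    ring
  rw [e, intervalIntegral.integral_add hcont.intervalIntegrable hiu, hftc,
    intervalIntegral.integral_const_mul]
  simp

lemma key_identity (hq : Continuous q) (hu : IsHeatSolution q a u ux uxx ut) {C c : ℝ} (hc : 0 < c)
    (hb : HeatGrowthBound u ux C c) {s : ℝ} {φ D : ℝ → ℂ}
    (hφ : IsSol q s φ D) (h0 : φ 0 = 0) {N : ℝ} (hN : 0 < N) :
    φ 1 * (∫ t in (0:ℝ)..N, Complex.exp (-s * t) * (ux 1 t : ℂ)) -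
      D 1 * (∫ t in (0:ℝ)..N, Complex.exp (-s * t) * (a t : ℂ)) =
      Complex.exp (-s * N) * ∫ x in (0:ℝ)..1, φ x * (u x N : ℂ) := by
  have hF := flux_int hu hc hb s hN
  have hA := pulse_int hu s hN
  have hIntg : IntervalIntegrable (fun t : ℝ => φ 1 * (Complex.exp (-s * t) * (ux 1 t : ℂ)) -
    D 1 * (Complex.exp (-s * t) * (a t : ℂ))) volume 0 N := (hF.const_mul _).sub (hA.const_mul _)
  have hz : (∫ x in (0:ℝ)..1, φ x * (u x 0 : ℂ)) = 0 := by
    rw [intervalIntegral.integral_congr_Ioo_of_le (g := fun _ => (0:ℂ)) zero_le_one]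
    · simp
    · intro x hx
      simp [hu.2.2.2.2.2.2.2.1 x ⟨hx.1.le, hx.2.le⟩]
  have hftc := intervalIntegral.integral_eq_sub_of_hasDeriv_right_of_le hN.le
    (f := fun t : ℝ => Complex.exp (-s * t) * ∫ x in (0:ℝ)..1, φ x * (u x t : ℂ))
    (ContinuousOn.mul (by fun_prop) (phi_cont hu hc hb hφ.contY)) (f' := fun t : ℝ =>
      φ 1 * (Complex.exp (-s * t) * (ux 1 t : ℂ)) - D 1 * (Complex.exp (-s * t) * (a t : ℂ))) ?_ hIntg
  · rw [intervalIntegral.integral_sub (hF.const_mul _) (hA.const_mul _),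
      intervalIntegral.integral_const_mul, intervalIntegral.integral_const_mul, hz] at hftc
    rw [hftc]; simp
  · intro t ht
    have h1 := phi_deriv hq hu hφ.contY ht.1
    rw [phi_rhs hq hu hφ h0 ht.1] at h1
    have h2 : HasDerivAt (fun t : ℝ => Complex.exp (-s * t)) (Complex.exp (-s * t) * (-s * 1)) t :=
      ((Complex.ofRealCLM.hasDerivAt (x := t)).const_mul (-s : ℂ)).cexp
    exact (h2.hasDerivWithinAt.mul h1).congr_deriv (by ring)

lemma decay {C c : ℝ} (hb : HeatGrowthBound u ux C c) {s : ℝ} (hs : c < s) {φ : ℝ → ℂ} (hφ : Continuous φ) :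
    Tendsto (fun N : ℝ => Complex.exp (-s * N) * ∫ x in (0:ℝ)..1, φ x * (u x N : ℂ)) atTop (𝓝 0) := by
  obtain ⟨B, hB⟩ := isCompact_Icc.exists_bound_of_continuousOn (s := Icc (0:ℝ) 1) hφ.continuousOn
  have hB0 : 0 ≤ B := (norm_nonneg _).trans (hB 1 ⟨zero_le_one, le_rfl⟩)
  have hlim : Tendsto (fun N : ℝ => B * C * Real.exp ((c - s) * N)) atTop (𝓝 0) := by
    have : Tendsto (fun N : ℝ => (c - s) * N) atTop atBot :=
      tendsto_id.const_mul_atTop_of_neg (by linarith)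
    simpa using (Real.tendsto_exp_atBot.comp this).const_mul (B * C)
  refine squeeze_zero_norm' ?_ hlim
  filter_upwards [eventually_ge_atTop 0] with N hN
  have h1 : ‖∫ x in (0:ℝ)..1, φ x * (u x N : ℂ)‖ ≤ B * (C * Real.exp (c * N)) * |1 - 0| := by
    refine intervalIntegral.norm_integral_le_of_norm_le_const fun x hx => ?_
    rw [uIoc_of_le zero_le_one] at hx
    have hx' : x ∈ Icc (0:ℝ) 1 := ⟨hx.1.le, hx.2⟩
    have h := hb x hx' N hN
    rw [norm_mul, Complex.norm_real, Real.norm_eq_abs]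
    exact mul_le_mul (hB x hx') (by linarith [abs_nonneg (ux x N)]) (abs_nonneg _) hB0
  have h2 : ‖Complex.exp (-s * N)‖ = Real.exp (-s * N) := by
    rw [Complex.norm_exp]; simp
  rw [norm_mul, h2]
  calc Real.exp (-s * N) * _ ≤ Real.exp (-s * N) * (B * (C * Real.exp (c * N)) * |1 - 0|) := by gcongr
    _ = B * C * (Real.exp (-s * N) * Real.exp (c * N)) := by simp; ring
    _ = _ := by rw [← Real.exp_add]; congr 2; ring

end

lemma product_zero {q1 q2 a : ℝ → ℝ} (hq1 : Continuous q1) (hq2 : Continuous q2)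
    {u1 ux1 uxx1 ut1 u2 ux2 uxx2 ut2 : ℝ → ℝ → ℝ}
    (hu1 : IsHeatSolution q1 a u1 ux1 uxx1 ut1)
    (hu2 : IsHeatSolution q2 a u2 ux2 uxx2 ut2) {C1 c1 C2 c2 : ℝ} (hc1 : 0 < c1) (hc2 : 0 < c2)
    (hb1 : HeatGrowthBound u1 ux1 C1 c1) (hb2 : HeatGrowthBound u2 ux2 C2 c2)
    (hflux : ∀ t > (0:ℝ), ux1 1 t = ux2 1 t) {T : ℝ} (hT : 0 < T) (haT : ∀ t > T, a t = 0)
    {s : ℝ} (hs1 : c1 < s) (hs2 : c2 < s) {φ1 D1 φ2 D2 : ℝ → ℂ}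
    (h1 : IsSol q1 s φ1 D1) (h2 : IsSol q2 s φ2 D2) (h10 : φ1 0 = 0) (h20 : φ2 0 = 0) :
    (∫ t in (0:ℝ)..T, Complex.exp (-s * t) * (a t : ℂ)) * (φ1 1 * D2 1 - φ2 1 * D1 1) = 0 := by
  have hlim := ((decay hb1 hs1 h1.contY).const_mul (φ2 1)).sub
    ((decay hb2 hs2 h2.contY).const_mul (φ1 1))
  rw [mul_zero, mul_zero, sub_zero] at hlim
  refine tendsto_nhds_unique (l := (atTop : Filter ℝ)) ?_ hlim
  refine tendsto_const_nhds.congr' ?_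
  filter_upwards [eventually_gt_atTop T] with N hN
  have hN0 : 0 < N := hT.trans hN
  have hTN : (∫ t in (0:ℝ)..N, Complex.exp (-s * t) * (a t : ℂ)) =
      ∫ t in (0:ℝ)..T, Complex.exp (-s * t) * (a t : ℂ) := by
    have hz : (∫ t in T..N, Complex.exp (-s * t) * (a t : ℂ)) = 0 := by
      rw [intervalIntegral.integral_congr_Ioo_of_le (g := fun _ => (0:ℂ)) hN.le]
      · simp
      · intro t ht
        simp [haT t ht.1]
    have hi := pulse_int hu1 s hN0
    have hi1 := pulse_int hu1 s hT
    rw [← intervalIntegral.integral_add_adjacent_intervals hi1 (hi1.symm.trans hi), hz, add_zero]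
  have k1 := key_identity hq1 hu1 hc1 hb1 h1 h10 hN0
  have k2 := key_identity hq2 hu2 hc2 hb2 h2 h20 hN0
  have hFF : (∫ t in (0:ℝ)..N, Complex.exp (-s * t) * (ux1 1 t : ℂ)) =
      ∫ t in (0:ℝ)..N, Complex.exp (-s * t) * (ux2 1 t : ℂ) := by
    refine intervalIntegral.integral_congr_Ioo_of_le hN0.le fun t ht => ?_
    simp only [hflux t ht.1]
  rw [← k1, ← k2, hFF, hTN]
  ring

end HeatInv


namespace HeatInv
open Set MeasureTheory Filter Topology

lemma laplace_entire {b : ℝ → ℂ} (hb : Continuous b) (T : ℝ) :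
    Differentiable ℂ (fun s : ℂ => ∫ t in (0:ℝ)..T, Complex.exp (-s * t) * b t) := by
  intro s0
  refine (intervalIntegral.hasDerivAt_integral_of_dominated_loc_of_deriv_le (𝕜 := ℂ)
    (F' := fun s t => Complex.exp (-s * t) * (-t) * b t)
    (bound := fun t => Real.exp ((‖s0‖ + 1) * |t|) * |t| * ‖b t‖)
    (Metric.ball_mem_nhds s0 one_pos) ?_ ?_ ?_ ?_ ?_ ?_).2.differentiableAt
  · filter_upwards with s
    exact (by fun_prop : Continuous _).aestronglyMeasurable
  · exact (by fun_prop : Continuous _).intervalIntegrable _ _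
  · exact (by fun_prop : Continuous _).aestronglyMeasurable
  · filter_upwards with t _ s hs
    have hs1 : ‖s‖ ≤ ‖s0‖ + 1 := by
      have h1 : ‖s - s0‖ < 1 := by simpa [dist_eq_norm] using hs
      have h2 := norm_add_le (s - s0) s0
      rw [sub_add_cancel] at h2
      linarith
    rw [norm_mul, norm_mul, norm_neg, Complex.norm_real, Real.norm_eq_abs]
    gcongr
    rw [Complex.norm_exp]
    gcongr
    refine (Complex.re_le_norm _).trans ?_
    rw [norm_mul, norm_neg, Complex.norm_real, Real.norm_eq_abs]
    gcongr
  · exact (by fun_prop : Continuous _).intervalIntegrable _ _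
  · filter_upwards with t _ s _
    have h := (((hasDerivAt_id s).neg).mul_const (t:ℂ)).cexp.mul_const (b t)
    exact h.congr_deriv (by simp)

lemma laplace_inj {b : ℝ → ℂ} (hb : Continuous b) {T : ℝ} (hsupp : Function.support b ⊆ Ioc 0 T)
    (hA : ∀ s : ℂ, ∫ t in (0:ℝ)..T, Complex.exp (-s * t) * b t = 0) : b = 0 := by
  have hcs : HasCompactSupport b :=
    HasCompactSupport.of_support_subset_isCompact isCompact_Icc (hsupp.trans Ioc_subset_Icc_self)
  have hF : FourierTransform.fourier b = 0 := by
    funext w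
    rw [Real.fourier_real_eq_integral_exp_smul]
    rw [← intervalIntegral.integral_eq_integral_of_support_subset (a := 0) (b := T)]
    · refine Eq.trans ?_ (hA (2 * Real.pi * w * Complex.I))
      congr 1
      funext t
      rw [smul_eq_mul]
      congr 2
      push_cast
      ring
    · intro t ht
      apply hsupp
      intro h0
      apply ht
      simp [h0]
  have h := hb.fourierInv_fourier_eq (hb.integrable_of_hasCompactSupport hcs) (by
    rw [hF]; exact integrable_zero _ _ _)
  rw [← h, hF]
  funext w
  rw [Real.fourierInv_eq]
  simp

lemma entire_zero {F : ℂ → ℂ} (hF : Differentiable ℂ F) {c : ℝ} (h : ∀ s : ℝ, c < s → F s = 0) :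
    F = 0 := by
  have hFa : AnalyticOnNhd ℂ F univ := fun z _ => hF.analyticAt z
  refine hFa.eq_of_frequently_eq (z₀ := ((c + 1 : ℝ) : ℂ)) analyticOnNhd_const ?_
  have ht : Tendsto (fun n : ℕ => ((c + 1 + 1 / ((n:ℝ) + 1) : ℝ) : ℂ)) atTop
      (𝓝[{((c + 1 : ℝ) : ℂ)}ᶜ] ((c + 1 : ℝ) : ℂ)) := by
    refine tendsto_nhdsWithin_iff.2 ⟨?_, ?_⟩
    · refine (Complex.continuous_ofReal.tendsto _).comp ?_
      have := (tendsto_one_div_add_atTop_nhds_zero_nat (𝕜 := ℝ)).const_add (c + 1)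
      simpa using this
    · filter_upwards with n
      have : (0:ℝ) < 1 / ((n:ℝ) + 1) := by positivity
      simp only [mem_compl_iff, mem_singleton_iff]
      intro h
      have h' := Complex.ofReal_injective h
      linarith
  refine ht.frequently (Frequently.of_forall fun n => ?_)
  have : (0:ℝ) < 1 / ((n:ℝ) + 1) := by positivity
  exact h _ (by linarith)

lemma sol_congr {q p a : ℝ → ℝ} {u ux uxx ut : ℝ → ℝ → ℝ} (hu : IsHeatSolution q a u ux uxx ut)
    (h : ∀ x ∈ Icc (0:ℝ) 1, p x = q x) : IsHeatSolution p a u ux uxx ut := by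
  obtain ⟨hc, hx, hxx, hxxc, htt, htc, heq, hi, hbd⟩ := hu
  refine ⟨hc, hx, hxx, hxxc, htt, htc, fun x hx1 t ht => ?_, hi, hbd⟩
  rw [h x ⟨hx1.1.le, hx1.2.le⟩]
  exact heq x hx1 t ht

lemma main_cont {q1 q2 a : ℝ → ℝ} (hq1 : Continuous q1) (hq2 : Continuous q2)
    (ha : IsAdmissiblePulse a)
    {u1 ux1 uxx1 ut1 u2 ux2 uxx2 ut2 : ℝ → ℝ → ℝ}
    (hu1 : IsHeatSolution q1 a u1 ux1 uxx1 ut1)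
    (hu2 : IsHeatSolution q2 a u2 ux2 uxx2 ut2)
    (hb1 : ∃ C > (0:ℝ), ∃ c > (0:ℝ), HeatGrowthBound u1 ux1 C c)
    (hb2 : ∃ C > (0:ℝ), ∃ c > (0:ℝ), HeatGrowthBound u2 ux2 C c)
    (hflux : ∀ t > (0:ℝ), ux1 1 t = ux2 1 t) :
    ∀ x ∈ Ioo (0:ℝ) 1, q1 x = q2 x := by
  obtain ⟨C1, _, c1, hc1, hb1⟩ := hb1
  obtain ⟨C2, _, c2, hc2, hb2⟩ := hb2
  obtain ⟨_, ⟨T, hT, haT⟩, hane⟩ := ha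
  obtain ⟨f1, g1, hf1, hg1, hf10, hg10, hef1, heg1⟩ := exists_sol q1 hq1 0 1
  obtain ⟨f2, g2, hf2, hg2, hf20, hg20, hef2, heg2⟩ := exists_sol q2 hq2 0 1
  have h1mem : (1:ℝ) ∈ Icc (0:ℝ) 1 := ⟨zero_le_one, le_rfl⟩
  set b : ℝ → ℂ := fun t => ((u1 1 (max t 0) : ℝ) : ℂ) with hbdef
  have hbc : Continuous b := by
    refine Complex.continuous_ofReal.comp ?_
    exact (slice_t hu1 h1mem).comp_continuous (by fun_prop)
      (fun t => mem_Ici.2 (le_max_right t 0))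
  have hbpos : ∀ t, 0 < t → b t = (a t : ℂ) := by
    intro t ht
    simp only [hbdef, max_eq_left ht.le, (hu1.2.2.2.2.2.2.2.2 t ht).2]
  have hbsupp : Function.support b ⊆ Ioc 0 T := by
    intro t ht
    by_contra hcon
    apply ht
    rcases le_or_gt t 0 with h | h
    · simp only [hbdef, max_eq_right h, hu1.2.2.2.2.2.2.2.1 1 h1mem, Complex.ofReal_zero]
    · rw [hbpos t h, haT t (by
        by_contra h2
        exact hcon ⟨h, not_lt.1 h2⟩), Complex.ofReal_zero]
  have hAe := laplace_entire hbc T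
  have hGe : Differentiable ℂ (fun s => f1 s 1 * g2 s 1 - f2 s 1 * g1 s 1) :=
    ((hef1 1 h1mem).mul heg2).sub ((hef2 1 h1mem).mul heg1)
  have hprod := entire_zero (hAe.mul hGe) (c := max c1 c2) (by
    intro s hs
    have hs1 : c1 < s := (le_max_left _ _).trans_lt hs
    have hs2 : c2 < s := (le_max_right _ _).trans_lt hs
    have h := product_zero hq1 hq2 hu1 hu2 hc1 hc2 hb1 hb2 hflux hT haT hs1 hs2
      (φ1 := f1 s) (D1 := g1 s) (φ2 := f2 s) (D2 := g2 s)
      ⟨hf1 s, hg1 s⟩ ⟨hf2 s, hg2 s⟩ (hf10 s) (hf20 s)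
    have e : (∫ t in (0:ℝ)..T, Complex.exp (-s * t) * b t) =
        ∫ t in (0:ℝ)..T, Complex.exp (-s * t) * (a t : ℂ) := by
      refine intervalIntegral.integral_congr_Ioo_of_le hT.le fun t ht => ?_
      simp only [hbpos t ht.1]
    simp only [Pi.mul_apply]
    rw [e]
    exact h)
  rcases AnalyticOnNhd.eq_zero_or_eq_zero_of_mul_eq_zero (U := univ)
    (fun z _ => hAe.analyticAt z) (fun z _ => hGe.analyticAt z)
    (fun z _ => congrFun hprod z) isPreconnected_univ with h | h
  · exfalso
    have hb0 := laplace_inj hbc hbsupp (fun s => h s (mem_univ s))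
    apply hane
    refine ae_restrict_of_forall_mem measurableSet_Ioi fun t ht => ?_
    have h3 := hbpos t ht
    rw [hb0] at h3
    simpa using h3.symm
  · exact borg q1 q2 hq1 hq2 f1 g1 f2 g2 (fun s => ⟨hf1 s, hg1 s⟩) (fun s => ⟨hf2 s, hg2 s⟩)
      hf10 hg10 hf20 hg20 (fun s => sub_eq_zero.1 (h s (mem_univ s)))

end HeatInv

/-- if two classical heat solutions for continuous potentials `q1, q2`
with the same admissible boundary pulse `a` have the same flux at `x = 1` for all
`t > 0`, then `q1 = q2` on `[0,1]`. -/
theorem flux_at_right_end_determines_potential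
    (q1 q2 a : ℝ → ℝ)
    (hq1 : ContinuousOn q1 (Set.Icc 0 1)) (hq2 : ContinuousOn q2 (Set.Icc 0 1))
    (ha : IsAdmissiblePulse a)
    (u1 ux1 uxx1 ut1 u2 ux2 uxx2 ut2 : ℝ → ℝ → ℝ)
    (hu1 : IsHeatSolution q1 a u1 ux1 uxx1 ut1)
    (hu2 : IsHeatSolution q2 a u2 ux2 uxx2 ut2)
    (hb1 : ∃ C > (0:ℝ), ∃ c > (0:ℝ), HeatGrowthBound u1 ux1 C c)
    (hb2 : ∃ C > (0:ℝ), ∃ c > (0:ℝ), HeatGrowthBound u2 ux2 C c)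
    (hflux : ∀ t > (0:ℝ), ux1 1 t = ux2 1 t) :
    ∀ x ∈ Set.Icc (0:ℝ) 1, q1 x = q2 x := by
  have e1 : ∀ x ∈ Set.Icc (0:ℝ) 1,
      Set.IccExtend (zero_le_one (α := ℝ)) (Set.domRestrict (Set.Icc 0 1) q1) x = q1 x :=
    fun x hx => by rw [Set.IccExtend_of_mem _ _ hx]; rfl
  have e2 : ∀ x ∈ Set.Icc (0:ℝ) 1,
      Set.IccExtend (zero_le_one (α := ℝ)) (Set.domRestrict (Set.Icc 0 1) q2) x = q2 x :=
    fun x hx => by rw [Set.IccExtend_of_mem _ _ hx]; rfl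
  have k1 := hq1.domRestrict.Icc_extend' (h := zero_le_one)
  have k2 := hq2.domRestrict.Icc_extend' (h := zero_le_one)
  have hmain := HeatInv.main_cont k1 k2 ha (HeatInv.sol_congr hu1 e1) (HeatInv.sol_congr hu2 e2)
    hb1 hb2 hflux
  intro x hx
  have hcl : Set.EqOn _ _ (closure (Set.Ioo (0:ℝ) 1)) := Set.EqOn.closure hmain k1 k2
  rw [closure_Ioo (by norm_num)] at hcl
  rw [← e1 x hx, ← e2 x hx]
  exact hcl hx
end

section
/- Let q1 and q2 be continuous real-valued potentials on [0,1] and let S be an infinite subset of the positive reals having a finite accumulation point. If for every λ ∈ S one has ∂x φ(1,−λ;q1) · φ(1,−λ;q2) = ∂x φ(1,−λ;q2) · φ(1,−λ;q1) (i.e. the Weyl-type ratios ∂x φ(1,−λ;q)/φ(1,−λ;q) for q1 and q2 coincide on S), then q1 = q2 on [0,1]. -/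
/-- `IsSLSolution q nu f f'` : `f` solves `-f'' + q f = nu * f` on `[0,1]`
with `f 0 = 0`, `f' 0 = 1`, where `f'` is the derivative of `f` on `[0,1]`. -/
def IsSLSolution (q : ℝ → ℝ) (ν : ℝ) (φ φ' : ℝ → ℝ) : Prop :=
  (∀ x ∈ Set.Icc (0:ℝ) 1, HasDerivAt φ (φ' x) x) ∧
  (∀ x ∈ Set.Icc (0:ℝ) 1, HasDerivAt φ' (q x * φ x - ν * φ x) x) ∧
  φ 0 = 0 ∧ φ' 0 = 1

open Set Filter Topology

namespace BM

abbrev J : Type := Icc (0:ℝ) 1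
abbrev EE : Type := C(J, ℂ)

noncomputable def ext (f : EE) (t : ℝ) : ℂ := f (projIcc 0 1 zero_le_one t)

lemma ext_cont (f : EE) : Continuous (ext f) := f.continuous.comp continuous_projIcc

lemma ext_of_mem (f : EE) {t : ℝ} (ht : t ∈ Icc (0:ℝ) 1) : ext f t = f ⟨t, ht⟩ := by
  rw [ext, projIcc_of_mem]

lemma prim_hasDerivAt {g : ℝ → ℂ} (hg : Continuous g) (x : ℝ) :
    HasDerivAt (fun u => ∫ t in (0:ℝ)..u, g t) (g x) x :=
  intervalIntegral.integral_hasDerivAt_right (hg.intervalIntegrable _ _)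
    (hg.stronglyMeasurableAtFilter _ _) hg.continuousAt

lemma prim_cont {g : ℝ → ℂ} (hg : Continuous g) :
    Continuous (fun u : ℝ => ∫ t in (0:ℝ)..u, g t) :=
  continuous_iff_continuousAt.2 fun x => (prim_hasDerivAt hg x).continuousAt

noncomputable def Vlin : EE →ₗ[ℂ] EE where
  toFun f := ⟨fun x => ∫ t in (0:ℝ)..(x:ℝ), ext f t, (prim_cont (ext_cont f)).comp continuous_subtype_val⟩
  map_add' f g := by
    ext x
    simp only [ContinuousMap.coe_mk, ContinuousMap.add_apply]
    rw [← intervalIntegral.integral_add ((ext_cont f).intervalIntegrable _ _)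
      ((ext_cont g).intervalIntegrable _ _)]
    rfl
  map_smul' c f := by
    ext x
    simp only [ContinuousMap.coe_mk, ContinuousMap.smul_apply, RingHom.id_apply]
    rw [← intervalIntegral.integral_smul]
    rfl

lemma Vlin_bound (f : EE) (C : ℝ) (n : ℕ) (h : ∀ x : J, ‖f x‖ ≤ C * ((x:ℝ)^n / n.factorial)) (x : J) :
    ‖Vlin f x‖ ≤ C * ((x:ℝ)^(n+1) / (n+1).factorial) := by
  have h1 : ‖∫ t in (0:ℝ)..(x:ℝ), ext f t‖ ≤ ∫ t in (0:ℝ)..(x:ℝ), C * (t^n / n.factorial) := by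
    apply intervalIntegral.norm_integral_le_of_norm_le x.2.1
    · refine Eventually.of_forall fun t ht => ?_
      have hm : t ∈ Icc (0:ℝ) 1 := ⟨ht.1.le, ht.2.trans x.2.2⟩
      rw [ext_of_mem f hm]
      exact h ⟨t, hm⟩
    · exact Continuous.intervalIntegrable (by fun_prop) _ _
  refine h1.trans (le_of_eq ?_)
  rw [intervalIntegral.integral_const_mul, intervalIntegral.integral_div, integral_pow]
  rw [Nat.factorial_succ]
  have : (n.factorial : ℝ) ≠ 0 := by positivity
  push_cast
  field_simp
  simp

noncomputable def V : EE →L[ℂ] EE := Vlin.mkContinuous 1 (by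
  intro f
  rw [one_mul]
  rw [ContinuousMap.norm_le _ (norm_nonneg f)]
  intro x
  have := Vlin_bound f ‖f‖ 0 (by intro x; simpa using f.norm_coe_le_norm x) x
  refine this.trans ?_
  simp only [zero_add, pow_one, Nat.factorial_one, Nat.cast_one, div_one]
  exact mul_le_of_le_one_right (norm_nonneg _) x.2.2)

lemma V_apply (f : EE) (x : J) : V f x = ∫ t in (0:ℝ)..(x:ℝ), ext f t := rfl

lemma V_bound (f : EE) (C : ℝ) (n : ℕ) (h : ∀ x : J, ‖f x‖ ≤ C * ((x:ℝ)^n / n.factorial)) (x : J) :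
    ‖V f x‖ ≤ C * ((x:ℝ)^(n+1) / (n+1).factorial) := Vlin_bound f C n h x

noncomputable def NN (q : EE) (l : ℂ) : EE →L[ℂ] EE :=
  V * V * ContinuousLinearMap.mul ℂ EE q + l • (V * V)

lemma NN_apply (q : EE) (l : ℂ) (f : EE) : NN q l f = V (V ((q + l • 1) * f)) := by
  simp [NN, add_mul, map_add]

lemma NN_pow_bound (q : EE) (l : ℂ) (n : ℕ) (f : EE) (x : J) :
    ‖((NN q l)^n) f x‖ ≤ (‖q + l • 1‖^n * ‖f‖) * ((x:ℝ)^n / n.factorial) := by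
  induction n generalizing x with
  | zero => simpa using f.norm_coe_le_norm x
  | succ n ih =>
    rw [pow_succ', mul_apply_eq_comp, NN_apply]
    set g := ((NN q l)^n) f
    have h0 : ∀ x : J, ‖((q + l • 1) * g) x‖ ≤
        (‖q + l • 1‖^(n+1) * ‖f‖) * ((x:ℝ)^n / n.factorial) := by
      intro x
      rw [ContinuousMap.mul_apply, norm_mul, pow_succ']
      calc _ ≤ ‖q + l • 1‖ * ((‖q + l • 1‖^n * ‖f‖) * ((x:ℝ)^n / n.factorial)) :=
            mul_le_mul ((q + l • 1).norm_coe_le_norm x) (ih x) (norm_nonneg _) (norm_nonneg _)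
        _ = _ := by ring
    have h1 := V_bound _ _ _ h0
    have h2 := V_bound _ _ _ h1 x
    refine h2.trans ?_
    have hx0 := x.2.1
    have hx1 := x.2.2
    gcongr ?_ * (?_ / ?_)
    · exact pow_le_pow_of_le_one hx0 hx1 (by omega)
    · exact_mod_cast Nat.factorial_le (by omega)

lemma NN_pow_small (q : EE) (l : ℂ) :
    ∃ n : ℕ, ∃ r < 1, (0:ℝ) ≤ r ∧ ∀ f, ‖((NN q l)^n) f‖ ≤ r * ‖f‖ := by
  have ht := FloorSemiring.tendsto_pow_div_factorial_atTop (‖q + l • 1‖ : ℝ)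
  obtain ⟨n, hn⟩ := (ht.eventually (gt_mem_nhds zero_lt_one)).exists
  refine ⟨n, _, hn, by positivity, ?_⟩
  intro f
  rw [ContinuousMap.norm_le _ (by positivity)]
  intro x
  refine (NN_pow_bound q l n f x).trans ?_
  have hx0 := x.2.1
  have hx1 := x.2.2
  have : (x:ℝ)^n ≤ 1 := pow_le_one₀ hx0 hx1
  calc _ ≤ (‖q + l • 1‖^n * ‖f‖) * (1 / n.factorial) := by gcongr
    _ = _ := by ring

lemma resolvent_gen {E : Type*} [NormedAddCommGroup E] [NormedSpace ℂ E] [CompleteSpace E]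
    (N : ℂ → E →L[ℂ] E) (hNd : Differentiable ℂ N)
    (hN : ∀ l, ∃ n : ℕ, ∃ r < 1, 0 ≤ r ∧ ∀ f, ‖(N l ^ n) f‖ ≤ r * ‖f‖) (v : E) :
    ∃ w : ℂ → E, Differentiable ℂ w ∧ ∀ l, w l = v + N l (w l) := by
  have hU : ∀ l, IsUnit (1 - N l) := by
    intro l
    obtain ⟨n, r, hr, hr0, h⟩ := hN l
    have hnorm : ‖(N l)^n‖ < 1 := lt_of_le_of_lt (ContinuousLinearMap.opNorm_le_bound _ hr0 h) hr
    have h1 := isUnit_one_sub_of_norm_lt_one hnorm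
    rw [← mul_neg_geom_sum] at h1
    have hc : Commute (1 - N l) (∑ i ∈ Finset.range n, (N l)^i) := by
      rw [commute_iff_eq, mul_neg_geom_sum, geom_sum_mul_neg]
    exact (hc.isUnit_mul_iff.1 h1).1
  refine ⟨fun l => Ring.inverse (1 - N l) v, ?_, ?_⟩
  · intro l
    have h1 : DifferentiableAt ℂ (fun l => Ring.inverse (1 - N l)) l :=
      DifferentiableAt.comp (g := Ring.inverse) l
        (differentiableAt_inverse (hU l)) ((hNd l).const_sub 1)
    exact h1.clm_apply (differentiableAt_const _)
  · intro l
    have : (1 - N l) (Ring.inverse (1 - N l) v) = v := by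
      change ((1 - N l) * Ring.inverse (1 - N l)) _ = _
      rw [Ring.mul_inverse_cancel _ (hU l)]
      rfl
    nth_rewrite 2 [← this]
    simp

lemma affine_diff {E : Type*} [NormedAddCommGroup E] [NormedSpace ℂ E] (A B : E →L[ℂ] E) :
    Differentiable ℂ (fun l : ℂ => A + l • B) := by
  fun_prop

/-- solution of `u'' = (Q + l) u` on `[0,1]` -/
def Sol (Q : ℝ → ℝ) (l : ℂ) (u u' : ℝ → ℂ) : Prop :=
  ∀ x ∈ Icc (0:ℝ) 1, HasDerivAt u (u' x) x ∧ HasDerivAt u' (((Q x : ℂ) + l) * u x) x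

lemma exists_sol (Q : ℝ → ℝ) (hQ : ContinuousOn Q (Icc 0 1)) (a b : ℂ) :
    ∃ u u' : ℂ → ℝ → ℂ, (∀ l, Sol Q l (u l) (u' l) ∧ u l 0 = a ∧ u' l 0 = b) ∧
      ∀ x ∈ Icc (0:ℝ) 1, Differentiable ℂ (fun l => u l x) ∧ Differentiable ℂ (fun l => u' l x) := by
  let q : EE := ⟨fun x => (Q x : ℂ), Complex.continuous_ofReal.comp hQ.domRestrict⟩
  let X : EE := ⟨fun x => ((x : ℝ) : ℂ), by fun_prop⟩
  obtain ⟨w, hwd, hw0⟩ : ∃ w : ℂ → EE, Differentiable ℂ w ∧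
      ∀ l, w l = (a • 1 + b • X) + NN q l (w l) :=
    resolvent_gen (NN q) (affine_diff (V * V * ContinuousLinearMap.mul ℂ EE q) (V * V))
      (NN_pow_small q) _
  let g : ℂ → EE := fun l => (q + l • 1) * w l
  have hgd : Differentiable ℂ g := by
    intro l
    have : DifferentiableAt ℂ (fun l : ℂ => q + l • (1:EE)) l := by fun_prop
    exact this.mul (hwd l)
  have hw : ∀ l, w l = a • 1 + b • X + V (V (g l)) := by
    intro l
    rw [← NN_apply]
    exact hw0 l
  refine ⟨fun l x => a + ∫ t in (0:ℝ)..x, (b + ∫ s in (0:ℝ)..t, ext (g l) s),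
    fun l x => b + ∫ s in (0:ℝ)..x, ext (g l) s, ?_, ?_⟩
  · intro l
    have hc : Continuous fun x : ℝ => b + ∫ s in (0:ℝ)..x, ext (g l) s :=
      continuous_const.add (prim_cont (ext_cont _))
    have key : ∀ x (hx : x ∈ Icc (0:ℝ) 1),
        a + ∫ t in (0:ℝ)..x, (b + ∫ s in (0:ℝ)..t, ext (g l) s) = w l ⟨x, hx⟩ := by
      intro x hx
      rw [hw l]
      rw [intervalIntegral.integral_add (by simp) ((prim_cont (ext_cont _)).intervalIntegrable _ _)]
      simp only [ContinuousMap.add_apply, V_apply, ContinuousMap.smul_apply, ContinuousMap.one_apply]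
      have : (∫ t in (0:ℝ)..x, ∫ s in (0:ℝ)..t, ext (g l) s) = ∫ t in (0:ℝ)..x, ext (V (g l)) t := by
        apply intervalIntegral.integral_congr
        intro t ht
        rw [uIcc_of_le hx.1] at ht
        have hm : t ∈ Icc (0:ℝ) 1 := ⟨ht.1, ht.2.trans hx.2⟩
        simp only [ext_of_mem _ hm, V_apply]
      rw [this]
      simp [X]
      ring
    refine ⟨?_, by simp, by simp⟩
    intro x hx
    refine ⟨(prim_hasDerivAt hc x).const_add a, ?_⟩
    have := (prim_hasDerivAt (ext_cont (g l)) x).const_add b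
    refine this.congr_deriv ?_
    simp only [key x hx]
    rw [ext_of_mem _ hx]
    simp [g, q]
  · intro x hx
    have hev : ∀ (y : J) (f : ℂ → EE), Differentiable ℂ f → Differentiable ℂ (fun l => f l y) := by
      intro y f hf
      exact (ContinuousMap.evalCLM ℂ y).differentiable.comp hf
    have hc : ∀ l, Continuous fun x : ℝ => ∫ s in (0:ℝ)..x, ext (g l) s := fun l =>
       (prim_cont (ext_cont _))
    constructor
    · have : (fun l => a + ∫ t in (0:ℝ)..x, (b + ∫ s in (0:ℝ)..t, ext (g l) s)) =
        fun l => w l ⟨x, hx⟩ := by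
        funext l
        rw [hw l]
        rw [intervalIntegral.integral_add (by simp) ((prim_cont (ext_cont _)).intervalIntegrable _ _)]
        simp only [ContinuousMap.add_apply, V_apply, ContinuousMap.smul_apply, ContinuousMap.one_apply]
        have : (∫ t in (0:ℝ)..x, ∫ s in (0:ℝ)..t, ext (g l) s) = ∫ t in (0:ℝ)..x, ext (V (g l)) t := by
          apply intervalIntegral.integral_congr
          intro t ht
          rw [uIcc_of_le hx.1] at ht
          have hm : t ∈ Icc (0:ℝ) 1 := ⟨ht.1, ht.2.trans hx.2⟩
          simp only [ext_of_mem _ hm, V_apply]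
        rw [this]
        simp [X]
        ring
      rw [this]
      exact hev _ _ hwd
    · have h2 : Differentiable ℂ (fun l => V (g l)) := V.differentiable.comp hgd
      exact (hev ⟨x, hx⟩ _ h2).const_add b

lemma wronskian {Q : ℝ → ℝ} {l : ℂ} {u u' v v' : ℝ → ℂ} (hu : Sol Q l u u') (hv : Sol Q l v v')
    {x : ℝ} (hx : x ∈ Icc (0:ℝ) 1) :
    u x * v' x - u' x * v x = u 1 * v' 1 - u' 1 * v 1 := by
  have hd : ∀ x ∈ Icc (0:ℝ) 1, HasDerivAt (fun x => u x * v' x - u' x * v x) 0 x := by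
    intro x hx
    refine (((hu x hx).1.mul (hv x hx).2).sub ((hu x hx).2.mul (hv x hx).1)).congr_deriv ?_
    ring
  have := constant_of_has_deriv_right_zero (fun x hx => (hd x hx).continuousAt.continuousWithinAt)
    (fun x hx => (hd x (Ico_subset_Icc_self hx)).hasDerivWithinAt)
  rw [this x hx, this 1 (by simp)]

/-- modified first order variables -/
noncomputable def yy (k : ℂ) (u u' : ℝ → ℂ) (x : ℝ) : ℂ := Complex.exp (-(k * x)) * (u' x + k * u x)
noncomputable def zz (k : ℂ) (u u' : ℝ → ℂ) (x : ℝ) : ℂ := Complex.exp (-(k * x)) * (u' x - k * u x)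

lemma exp_deriv (k : ℂ) (x : ℝ) :
    HasDerivAt (fun x : ℝ => Complex.exp (k * x)) (Complex.exp (k * x) * k) x := by
  have h0 : HasDerivAt (fun x : ℝ => k * (x:ℂ)) (k * 1) x := (Complex.ofRealCLM.hasDerivAt).const_mul k
  simpa using h0.cexp

lemma yy_sub_zz (k : ℂ) (u u' : ℝ → ℂ) (x : ℝ) :
    yy k u u' x - zz k u u' x = 2 * k * (Complex.exp (-(k * x)) * u x) := by
  unfold yy zz; ring

lemma yy_deriv {Q : ℝ → ℝ} {k : ℂ} {u u' : ℝ → ℂ} (hu : Sol Q (k^2) u u') (hk : k ≠ 0)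
    {x : ℝ} (hx : x ∈ Icc (0:ℝ) 1) :
    HasDerivAt (yy k u u') ((Q x : ℂ) * ((yy k u u' x - zz k u u' x) / (2 * k))) x := by
  rw [yy_sub_zz]
  have h1 := exp_deriv (-k) x
  simp only [neg_mul] at h1
  refine (h1.mul ((hu x hx).2.add ((hu x hx).1.const_mul k))).congr_deriv ?_
  simp only [Pi.add_apply]
  field_simp
  ring

lemma zz_deriv {Q : ℝ → ℝ} {k : ℂ} {u u' : ℝ → ℂ} (hu : Sol Q (k^2) u u') (hk : k ≠ 0)
    {x : ℝ} (hx : x ∈ Icc (0:ℝ) 1) :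
    HasDerivAt (zz k u u')
      ((Q x : ℂ) * ((yy k u u' x - zz k u u' x) / (2 * k)) - 2 * k * zz k u u' x) x := by
  rw [yy_sub_zz]
  have h1 := exp_deriv (-k) x
  simp only [neg_mul] at h1
  refine (h1.mul ((hu x hx).2.sub ((hu x hx).1.const_mul k))).congr_deriv ?_
  simp only [Pi.sub_apply]
  unfold zz
  field_simp
  ring

lemma energy {Q : ℝ → ℝ} {M : ℝ} (hM : ∀ x ∈ Icc (0:ℝ) 1, |Q x| ≤ M) {k : ℂ} {u u' : ℝ → ℂ}
    (hu : Sol Q (k^2) u u') (hk : k ≠ 0) (hre : 0 ≤ k.re) {x : ℝ} (hx : x ∈ Icc (0:ℝ) 1) :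
    ‖yy k u u' x‖^2 + ‖zz k u u' x‖^2 ≤
      (2 * ‖u' 0‖^2 + 2 * ‖k‖^2 * ‖u 0‖^2) * Real.exp (2 * M / ‖k‖) := by
  set y := yy k u u' with hy
  set z := zz k u u' with hz
  have hk0 : 0 < ‖k‖ := norm_pos_iff.2 hk
  set K := 2 * M / ‖k‖ with hK
  have hM0 : 0 ≤ M := (abs_nonneg _).trans (hM 0 (by simp))
  have hK0 : 0 ≤ K := by positivity
  let G : ℝ → ℝ := fun x => (‖y x‖^2 + ‖z x‖^2) * Real.exp (-K * x)
  have hd : ∀ x ∈ Icc (0:ℝ) 1, ∃ d ≤ 0, HasDerivAt G d x := by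
    intro x hx
    have h1 := (yy_deriv hu hk hx).norm_sq
    have h2 := (zz_deriv hu hk hx).norm_sq
    have h3 : HasDerivAt (fun x : ℝ => Real.exp (-K * x)) (Real.exp (-K * x) * (-K)) x := by
      simpa using ((hasDerivAt_id x).const_mul (-K)).exp
    refine ⟨_, ?_, (h1.add h2).mul h3⟩
    simp only [← hy, ← hz]
    set w := (Q x : ℂ) * ((y x - z x) / (2 * k)) with hw
    have hwn : ‖w‖ ≤ (K / 4) * (‖y x‖ + ‖z x‖) := by
      rw [hw, norm_mul, norm_div, norm_mul, Complex.norm_real, Real.norm_eq_abs]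
      have := hM x hx
      have h5 := norm_sub_le (y x) (z x)
      calc |Q x| * (‖y x - z x‖ / (‖(2:ℂ)‖ * ‖k‖)) ≤ M * ((‖y x‖ + ‖z x‖) / (‖(2:ℂ)‖ * ‖k‖)) := by
            gcongr
        _ = _ := by rw [hK]; simp; field_simp; norm_num
    have i1 : inner ℝ (y x) w ≤ ‖y x‖ * ‖w‖ := real_inner_le_norm _ _
    have i2 : inner ℝ (z x) w ≤ ‖z x‖ * ‖w‖ := real_inner_le_norm _ _
    have i3 : inner ℝ (z x) (2 * k * z x) = 2 * k.re * ‖z x‖^2 := by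
      rw [Complex.inner, ← Complex.normSq_eq_norm_sq, Complex.normSq_apply]
      simp
      ring
    rw [inner_sub_right, i3]
    have hfac : (2 * inner ℝ (y x) w + 2 * (inner ℝ (z x) w - 2 * k.re * ‖z x‖^2)) ≤
        K * (‖y x‖^2 + ‖z x‖^2) := by
      have a1 : 0 ≤ k.re * ‖z x‖^2 := by positivity
      have a2 : (‖y x‖ + ‖z x‖) * ‖w‖ ≤ (‖y x‖ + ‖z x‖) * ((K / 4) * (‖y x‖ + ‖z x‖)) := by gcongr
      nlinarith [mul_nonneg hK0 (sq_nonneg (‖y x‖ - ‖z x‖)), mul_nonneg hK0 (sq_nonneg (‖y x‖)),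
        mul_nonneg hK0 (sq_nonneg (‖z x‖))]
    have he := Real.exp_pos (-K * x)
    simp only [Pi.add_apply]
    nlinarith
  have hanti : AntitoneOn G (Icc 0 1) := by
    apply antitoneOn_of_deriv_nonpos (convex_Icc 0 1)
    · intro x hx
      obtain ⟨d, -, h⟩ := hd x hx
      exact h.continuousAt.continuousWithinAt
    · intro x hx
      obtain ⟨d, -, h⟩ := hd x (interior_subset hx)
      exact h.differentiableAt.differentiableWithinAt
    · intro x hx
      obtain ⟨d, h0, h⟩ := hd x (interior_subset hx)
      rw [h.deriv]; exact h0
  have hG := hanti (left_mem_Icc.2 zero_le_one) hx hx.1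
  have hG0 : G 0 = 2 * ‖u' 0‖^2 + 2 * ‖k‖^2 * ‖u 0‖^2 := by
    simp only [G, y, z, yy, zz]
    simp
    have := parallelogram_law_with_norm ℝ (u' 0) (k * u 0)
    rw [norm_mul] at this
    nlinarith
  rw [hG0] at hG
  have hexp : Real.exp (-K * x) * Real.exp (K * x) = 1 := by
    rw [← Real.exp_add]; simp
  calc ‖y x‖^2 + ‖z x‖^2 = G x * Real.exp (K * x) := by
        simp only [G]; rw [mul_assoc, hexp, mul_one]
    _ ≤ (2 * ‖u' 0‖^2 + 2 * ‖k‖^2 * ‖u 0‖^2) * Real.exp (K * x) := by gcongr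
    _ ≤ _ := by
        gcongr
        exact mul_le_of_le_one_right hK0 hx.2

lemma norm_exp_mul (k : ℂ) (x : ℝ) : ‖Complex.exp (k * x)‖ = Real.exp (k.re * x) := by
  rw [Complex.norm_exp]; simp

lemma diff_bound {Q : ℝ → ℝ} {M : ℝ} (hM : ∀ x ∈ Icc (0:ℝ) 1, |Q x| ≤ M) {k : ℂ} {u u' : ℝ → ℂ}
    (hu : Sol Q (k^2) u u') (hk : 1 ≤ ‖k‖) (hre : 0 ≤ k.re) {x : ℝ} (hx : x ∈ Icc (0:ℝ) 1) :
    ‖yy k u u' x - zz k u u' x‖ ≤ 2 * ((‖u' 0‖ + ‖k‖ * ‖u 0‖) * Real.exp M) := by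
  have hk0 : k ≠ 0 := by
    rintro rfl
    simp at hk
    linarith
  have hM0 : 0 ≤ M := (abs_nonneg _).trans (hM 0 (by simp))
  have h := energy hM hu hk0 hre hx
  have he : Real.exp (2 * M / ‖k‖) ≤ Real.exp M ^ 2 := by
    rw [← Real.exp_nat_mul]
    apply Real.exp_le_exp.2
    push_cast
    exact div_le_self (by positivity) hk
  have h2 : ‖yy k u u' x‖^2 + ‖zz k u u' x‖^2 ≤
      (2 * ‖u' 0‖^2 + 2 * ‖k‖^2 * ‖u 0‖^2) * Real.exp M ^ 2 := h.trans (by gcongr)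
  apply abs_le_of_sq_le_sq' _ (by positivity) |>.2
  have h3 := norm_sub_le (yy k u u' x) (zz k u u' x)
  have h4 : ‖yy k u u' x - zz k u u' x‖^2 ≤ (‖yy k u u' x‖ + ‖zz k u u' x‖)^2 := by gcongr
  have h5 : 0 ≤ ‖u' 0‖ * (‖k‖ * ‖u 0‖) * Real.exp M ^ 2 := by positivity
  nlinarith [sq_nonneg (‖yy k u u' x‖ - ‖zz k u u' x‖)]

lemma norm_sub_eq (k : ℂ) (u u' : ℝ → ℂ) (x : ℝ) :
    2 * (‖k‖ * ‖u x‖) = Real.exp (k.re * x) * ‖yy k u u' x - zz k u u' x‖ := by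
  rw [yy_sub_zz, norm_mul, norm_mul, norm_mul, ← neg_mul, norm_exp_mul]
  have : Real.exp (k.re * x) * Real.exp ((-k).re * x) = 1 := by
    rw [← Real.exp_add]; simp
  have h2 : ‖(2:ℂ)‖ = 2 := by simp
  rw [h2]
  calc _ = (Real.exp (k.re * x) * Real.exp ((-k).re * x)) * (2 * (‖k‖ * ‖u x‖)) := by rw [this, one_mul]
    _ = _ := by ring

lemma upper {Q : ℝ → ℝ} {M : ℝ} (hM : ∀ x ∈ Icc (0:ℝ) 1, |Q x| ≤ M) {k : ℂ} {u u' : ℝ → ℂ}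
    (hu : Sol Q (k^2) u u') (hk : 1 ≤ ‖k‖) (hre : 0 ≤ k.re) {x : ℝ} (hx : x ∈ Icc (0:ℝ) 1) :
    ‖k‖ * ‖u x‖ ≤ Real.exp (k.re * x) * ((‖u' 0‖ + ‖k‖ * ‖u 0‖) * Real.exp M) := by
  have h1 := diff_bound hM hu hk hre hx
  have h2 := norm_sub_eq k u u' x
  have h3 := mul_le_mul_of_nonneg_left h1 (Real.exp_pos (k.re * x)).le
  linarith

lemma lower {Q : ℝ → ℝ} {M : ℝ} (hM : ∀ x ∈ Icc (0:ℝ) 1, |Q x| ≤ M) {k : ℂ} {u u' : ℝ → ℂ}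
    (hu : Sol Q (k^2) u u') (hk : 1 ≤ ‖k‖) (hre : 0 ≤ k.re) (h0 : u 0 = 0) (h0' : u' 0 = 1)
    {x : ℝ} (hx : x ∈ Icc (0:ℝ) 1) :
    Real.exp (k.re * x) * (1 - Real.exp (-(2 * k.re * x)) - 2 * (M * Real.exp M / ‖k‖)) ≤
      2 * (‖k‖ * ‖u x‖) := by
  have hk0 : k ≠ 0 := by
    rintro rfl
    simp at hk
    linarith
  have hM0 : 0 ≤ M := (abs_nonneg _).trans (hM 0 (by simp))
  rw [norm_sub_eq k u u' x]
  gcongr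
  set y := yy k u u' with hy
  set z := zz k u u' with hz
  have hw : ∀ t ∈ Icc (0:ℝ) 1, ‖(Q t : ℂ) * ((y t - z t) / (2 * k))‖ ≤ M * Real.exp M / ‖k‖ := by
    intro t ht
    have h1 := diff_bound hM hu hk hre ht
    rw [h0, h0'] at h1
    simp only [norm_one, norm_zero, mul_zero, add_zero, one_mul] at h1
    rw [norm_mul, norm_div, norm_mul, Complex.norm_real, Real.norm_eq_abs]
    have h2 : ‖(2:ℂ)‖ = 2 := by simp
    rw [h2]
    calc |Q t| * (‖y t - z t‖ / (2 * ‖k‖)) ≤ M * ((2 * Real.exp M) / (2 * ‖k‖)) := by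
          gcongr
          exact hM t ht
      _ = _ := by field_simp
  have hsub : Icc 0 x ⊆ Icc (0:ℝ) 1 := Icc_subset_Icc_right hx.2
  have hy0 : y 0 = 1 := by simp [hy, yy, h0, h0']
  have hz0 : z 0 = 1 := by simp [hz, zz, h0, h0']
  have a1 : ‖y x - y 0‖ ≤ M * Real.exp M / ‖k‖ * ‖x - 0‖ :=
    Convex.norm_image_sub_le_of_norm_hasDerivWithin_le (s := Icc 0 x)
      (fun t ht => (yy_deriv hu hk0 (hsub ht)).hasDerivWithinAt)
      (fun t ht => hw t (hsub ht)) (convex_Icc _ _) (left_mem_Icc.2 hx.1) (right_mem_Icc.2 hx.1)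
  have a2 : ‖Complex.exp (2 * k * x) * z x - Complex.exp (2 * k * (0:ℝ)) * z 0‖ ≤
      (Real.exp (2 * k.re * x) * (M * Real.exp M / ‖k‖)) * ‖x - 0‖ := by
    refine Convex.norm_image_sub_le_of_norm_hasDerivWithin_le (s := Icc 0 x)
      (f := fun t : ℝ => Complex.exp (2 * k * t) * z t)
      (f' := fun t : ℝ => Complex.exp (2 * k * t) * ((Q t : ℂ) * ((y t - z t) / (2 * k))))
      (fun t ht => ?_)
      (fun t ht => ?_) (convex_Icc _ _) (left_mem_Icc.2 hx.1) (right_mem_Icc.2 hx.1)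
    · refine HasDerivAt.hasDerivWithinAt ?_
      refine ((exp_deriv (2 * k) t).mul (zz_deriv hu hk0 (hsub ht))).congr_deriv ?_
      simp only [← hy, ← hz]
      ring
    · rw [norm_mul, norm_exp_mul]
      have : (2 * k).re = 2 * k.re := by simp
      rw [this]
      gcongr
      · exact ht.2
      · exact hw t (hsub ht)
  set δ := M * Real.exp M / ‖k‖
  have hδ : 0 ≤ δ := by positivity
  have hxn : ‖x - 0‖ ≤ 1 := by rw [sub_zero, Real.norm_eq_abs, abs_of_nonneg hx.1]; exact hx.2
  have b1 : ‖y x - 1‖ ≤ δ := by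
    rw [hy0] at a1
    exact a1.trans (mul_le_of_le_one_right hδ hxn)
  have b2 : ‖Complex.exp (2 * k * x) * z x - 1‖ ≤ Real.exp (2 * k.re * x) * δ := by
    rw [hz0] at a2
    simp only [Complex.ofReal_zero, mul_zero, Complex.exp_zero, mul_one] at a2
    exact a2.trans (mul_le_of_le_one_right (by positivity) hxn)
  have b3 : ‖z x‖ ≤ Real.exp (-(2 * k.re * x)) + δ := by
    have c1 : ‖Complex.exp (2 * k * x) * z x‖ ≤ 1 + Real.exp (2 * k.re * x) * δ := by
      have := norm_add_le (Complex.exp (2 * k * x) * z x - 1) 1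
      simp only [sub_add_cancel, norm_one] at this
      linarith
    rw [norm_mul, norm_exp_mul] at c1
    have : (2 * k).re = 2 * k.re := by simp
    rw [this] at c1
    have e1 : Real.exp (-(2 * k.re * x)) * Real.exp (2 * k.re * x) = 1 := by
      rw [← Real.exp_add]; simp
    have c2 := mul_le_mul_of_nonneg_left c1 (Real.exp_pos (-(2 * k.re * x))).le
    calc ‖z x‖ = (Real.exp (-(2 * k.re * x)) * Real.exp (2 * k.re * x)) * ‖z x‖ := by rw [e1, one_mul]
      _ = Real.exp (-(2 * k.re * x)) * (Real.exp (2 * k.re * x) * ‖z x‖) := by ring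
      _ ≤ _ := c2
      _ = Real.exp (-(2 * k.re * x)) +
        (Real.exp (-(2 * k.re * x)) * Real.exp (2 * k.re * x)) * δ := by ring
      _ = _ := by rw [e1, one_mul]
  have b4 : (1:ℝ) ≤ ‖y x - z x‖ + ‖y x - 1‖ + ‖z x‖ := by
    have h1 : (1:ℂ) = (y x - z x) - (y x - 1) + z x := by ring
    calc (1:ℝ) = ‖(1:ℂ)‖ := by simp
      _ = ‖(y x - z x) - (y x - 1) + z x‖ := by rw [← h1]
      _ ≤ ‖(y x - z x) - (y x - 1)‖ + ‖z x‖ := norm_add_le _ _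
      _ ≤ _ := by gcongr; exact norm_sub_le _ _
  linarith

lemma uniq {Q : ℝ → ℝ} {M : ℝ} (hM : ∀ x ∈ Icc (0:ℝ) 1, |Q x| ≤ M) {k : ℂ} {u u' : ℝ → ℂ}
    (hu : Sol Q (k^2) u u') (hk : k ≠ 0) (hre : 0 ≤ k.re) (h0 : u 0 = 0) (h0' : u' 0 = 0)
    {x : ℝ} (hx : x ∈ Icc (0:ℝ) 1) : u x = 0 ∧ u' x = 0 := by
  have h := energy hM hu hk hre hx
  rw [h0, h0'] at h
  simp only [norm_zero] at h
  have hy : ‖yy k u u' x‖ = 0 := by nlinarith [sq_nonneg ‖yy k u u' x‖, sq_nonneg ‖zz k u u' x‖]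
  have hz : ‖zz k u u' x‖ = 0 := by nlinarith [sq_nonneg ‖yy k u u' x‖, sq_nonneg ‖zz k u u' x‖]
  rw [norm_eq_zero] at hy hz
  have hy1 : u' x + k * u x = 0 := by simpa [yy] using hy
  have hz1 : u' x - k * u x = 0 := by simpa [zz] using hz
  constructor
  · have : k * u x = 0 := by linear_combination (hy1 - hz1) / 2
    simpa [hk] using this
  · linear_combination (hy1 + hz1) / 2

/-- the fundamental solutions used in the argument -/
structure Pack (Q : ℝ → ℝ) (M : ℝ) (f f' s s' c c' : ℂ → ℝ → ℂ) : Prop where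
  fsol : ∀ l, Sol Q l (f l) (f' l)
  ssol : ∀ l, Sol Q l (s l) (s' l)
  csol : ∀ l, Sol Q l (c l) (c' l)
  f0 : ∀ l, f l 0 = 0
  f0' : ∀ l, f' l 0 = 1
  s1 : ∀ l, s l 1 = 0
  s1' : ∀ l, s' l 1 = 1
  c1 : ∀ l, c l 1 = 1
  c1' : ∀ l, c' l 1 = 0
  fd : Differentiable ℂ (fun l => f l 1)
  fd' : Differentiable ℂ (fun l => f' l 1)
  sd : ∀ x ∈ Icc (0:ℝ) 1, Differentiable ℂ (fun l => s l x)
  cd : ∀ x ∈ Icc (0:ℝ) 1, Differentiable ℂ (fun l => c l x)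
  fup : ∀ k : ℂ, 1 ≤ ‖k‖ → 0 ≤ k.re → ∀ x ∈ Icc (0:ℝ) 1,
    ‖k‖ * ‖f (k^2) x‖ ≤ Real.exp (k.re * x) * Real.exp M
  sup : ∀ k : ℂ, 1 ≤ ‖k‖ → 0 ≤ k.re → ∀ x ∈ Icc (0:ℝ) 1,
    ‖k‖ * ‖s (k^2) x‖ ≤ Real.exp (k.re * (1 - x)) * Real.exp M
  cup : ∀ k : ℂ, 1 ≤ ‖k‖ → 0 ≤ k.re → ∀ x ∈ Icc (0:ℝ) 1,
    ‖c (k^2) x‖ ≤ Real.exp (k.re * (1 - x)) * Real.exp M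
  flow : ∀ k : ℂ, 1 ≤ ‖k‖ → 0 ≤ k.re →
    Real.exp k.re * (1 - Real.exp (-(2 * k.re)) - 2 * (M * Real.exp M / ‖k‖)) ≤
      2 * (‖k‖ * ‖f (k^2) 1‖)
  slow : ∀ k : ℂ, 1 ≤ ‖k‖ → 0 ≤ k.re → ∀ x ∈ Icc (0:ℝ) 1,
    Real.exp (k.re * (1 - x)) *
      (1 - Real.exp (-(2 * k.re * (1 - x))) - 2 * (M * Real.exp M / ‖k‖)) ≤
      2 * (‖k‖ * ‖s (k^2) x‖)

lemma refl_mem {x : ℝ} (hx : x ∈ Icc (0:ℝ) 1) : 1 - x ∈ Icc (0:ℝ) 1 := by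
  constructor <;> linarith [hx.1, hx.2]

lemma refl_deriv {u : ℝ → ℂ} {d : ℂ} {x : ℝ} (h : HasDerivAt u d (1 - x)) :
    HasDerivAt (fun x => u (1 - x)) (-d) x := by
  exact h.comp_const_sub 1 x

lemma exists_pack (Q : ℝ → ℝ) (hQ : ContinuousOn Q (Icc 0 1)) (M : ℝ)
    (hM : ∀ x ∈ Icc (0:ℝ) 1, |Q x| ≤ M) :
    ∃ f f' s s' c c', Pack Q M f f' s s' c c' := by
  obtain ⟨f, f', hf, hfd⟩ := exists_sol Q hQ 0 1
  have hR : ContinuousOn (fun x => Q (1 - x)) (Icc 0 1) :=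
    hQ.comp (by fun_prop) (fun x hx => refl_mem hx)
  have hRM : ∀ x ∈ Icc (0:ℝ) 1, |Q (1 - x)| ≤ M := fun x hx => hM _ (refl_mem hx)
  obtain ⟨s, s', hs, hsd⟩ := exists_sol _ hR 0 1
  obtain ⟨c, c', hc, hcd⟩ := exists_sol _ hR 1 0
  have h11 : (1:ℝ) ∈ Icc (0:ℝ) 1 := by simp
  refine ⟨f, f', fun l x => - s l (1 - x), fun l x => s' l (1 - x), fun l x => c l (1 - x),
    fun l x => - c' l (1 - x), ?_⟩
  constructor
  · exact fun l => (hf l).1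
  · intro l x hx
    have := (hs l).1 _ (refl_mem hx)
    refine ⟨(refl_deriv this.1).neg.congr_deriv (by simp), (refl_deriv this.2).congr_deriv ?_⟩
    simp
  · intro l x hx
    have := (hc l).1 _ (refl_mem hx)
    refine ⟨refl_deriv this.1, (refl_deriv this.2).neg.congr_deriv ?_⟩
    simp
  · exact fun l => (hf l).2.1
  · exact fun l => (hf l).2.2
  · intro l; simp [(hs l).2.1]
  · intro l; simp [(hs l).2.2]
  · intro l; simp [(hc l).2.1]
  · intro l; simp [(hc l).2.2]
  · exact (hfd 1 h11).1
  · exact (hfd 1 h11).2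
  · exact fun x hx => (hsd _ (refl_mem hx)).1.neg
  · exact fun x hx => (hcd _ (refl_mem hx)).1
  · intro k hk hre x hx
    have := upper hM (hf (k^2)).1 hk hre hx
    simpa [(hf (k^2)).2.1, (hf (k^2)).2.2] using this
  · intro k hk hre x hx
    have := upper hRM (hs (k^2)).1 hk hre (refl_mem hx)
    simpa [(hs (k^2)).2.1, (hs (k^2)).2.2] using this
  · intro k hk hre x hx
    have := upper hRM (hc (k^2)).1 hk hre (refl_mem hx)
    rw [(hc (k^2)).2.1, (hc (k^2)).2.2] at this
    simp only [norm_zero, norm_one, zero_add, mul_one] at this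
    have hk0 : 0 < ‖k‖ := by linarith
    apply le_of_mul_le_mul_left _ hk0
    linarith
  · intro k hk hre
    have := lower hM (hf (k^2)).1 hk hre (hf (k^2)).2.1 (hf (k^2)).2.2 h11
    simpa using this
  · intro k hk hre x hx
    have := lower hRM (hs (k^2)).1 hk hre (hs (k^2)).2.1 (hs (k^2)).2.2 (refl_mem hx)
    simpa using this

lemma Pack.real {Q : ℝ → ℝ} {M : ℝ} {f f' s s' c c' : ℂ → ℝ → ℂ} (P : Pack Q M f f' s s' c c')
    (hM : ∀ x ∈ Icc (0:ℝ) 1, |Q x| ≤ M) {r : ℝ} (hr : 0 < r) :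
    IsSLSolution Q (-r) (fun x => (f r x).re) (fun x => (f' r x).re) ∧
      f r 1 = ((f r 1).re : ℂ) ∧ f' r 1 = ((f' r 1).re : ℂ) := by
  have hsol := P.fsol (r : ℂ)
  constructor
  · refine ⟨?_, ?_, ?_, ?_⟩
    · intro x hx
      exact Complex.reCLM.hasFDerivAt.comp_hasDerivAt x (hsol x hx).1
    · intro x hx
      refine (Complex.reCLM.hasFDerivAt.comp_hasDerivAt x (hsol x hx).2).congr_deriv ?_
      simp
      ring
    · simp [P.f0]
    · simp [P.f0']
  · have hconj : ∀ (u : ℝ → ℂ) (d : ℂ) (x : ℝ), HasDerivAt u d x →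
        HasDerivAt (fun x => (starRingEnd ℂ) (u x)) ((starRingEnd ℂ) d) x := by
      intro u d x h
      exact Complex.conjCLE.toContinuousLinearMap.hasFDerivAt.comp_hasDerivAt x h
    have hk : ((Real.sqrt r : ℝ) : ℂ)^2 = r := by
      rw [← Complex.ofReal_pow, Real.sq_sqrt hr.le]
    have hv : Sol Q (((Real.sqrt r : ℝ) : ℂ)^2) (fun x => f r x - (starRingEnd ℂ) (f r x))
        (fun x => f' r x - (starRingEnd ℂ) (f' r x)) := by
      rw [hk]
      intro x hx
      refine ⟨(hsol x hx).1.sub (hconj _ _ _ (hsol x hx).1), ?_⟩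
      refine ((hsol x hx).2.sub (hconj _ _ _ (hsol x hx).2)).congr_deriv ?_
      simp
      ring
    have hs : 0 < Real.sqrt r := Real.sqrt_pos.2 hr
    obtain ⟨h1, h2⟩ := uniq hM hv (by exact_mod_cast hs.ne') (by simp) (by simp [P.f0])
      (by simp [P.f0']) (x := 1) (by simp)
    rw [sub_eq_zero] at h1 h2
    exact ⟨(Complex.conj_eq_iff_re.1 h1.symm).symm, (Complex.conj_eq_iff_re.1 h2.symm).symm⟩

lemma Pack.wr {Q : ℝ → ℝ} {M : ℝ} {f f' s s' c c' : ℂ → ℝ → ℂ} (P : Pack Q M f f' s s' c c')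
    (l : ℂ) {x : ℝ} (hx : x ∈ Icc (0:ℝ) 1) : c l x * s' l x - c' l x * s l x = 1 := by
  rw [wronskian (P.csol l) (P.ssol l) hx, P.c1, P.c1', P.s1, P.s1']; ring

lemma Pack.rel {Q : ℝ → ℝ} {M : ℝ} {f f' s s' c c' : ℂ → ℝ → ℂ} (P : Pack Q M f f' s s' c c')
    (l : ℂ) {x : ℝ} (hx : x ∈ Icc (0:ℝ) 1) : f l x = f l 1 * c l x + f' l 1 * s l x := by
  have h1 := P.wr l hx
  have h2 := wronskian (P.fsol l) (P.ssol l) hx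
  have h3 := wronskian (P.fsol l) (P.csol l) hx
  rw [P.s1, P.s1'] at h2
  rw [P.c1, P.c1'] at h3
  linear_combination (-f l x) * h1 + c l x * h2 - s l x * h3

section main
variable {Q1 Q2 : ℝ → ℝ} {M : ℝ} {f1 f1' s1 s1' c1 c1' f2 f2' s2 s2' c2 c2' : ℂ → ℝ → ℂ}

lemma ray_bound (P1 : Pack Q1 M f1 f1' s1 s1' c1 c1') (P2 : Pack Q2 M f2 f2' s2 s2' c2 c2')
    (hM0 : 0 ≤ M)
    (hW : ∀ l, f1' l 1 * f2 l 1 = f2' l 1 * f1 l 1) {x : ℝ} (hx : x ∈ Icc (0:ℝ) 1)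
    (k : ℂ) (hk : 2 + 8 * (M * Real.exp M) ≤ k.re) :
    ‖c1 (k^2) x * s2 (k^2) x - c2 (k^2) x * s1 (k^2) x‖ ≤ 32 * Real.exp M ^ 3 / k.re := by
  have hMM : 0 ≤ M * Real.exp M := by positivity
  have hre2 : 2 ≤ k.re := by linarith
  have hre : 0 ≤ k.re := by linarith
  have hkre : k.re ≤ ‖k‖ := Complex.re_le_norm k
  have hkn : 1 ≤ ‖k‖ := by linarith
  have hk0 : 0 < ‖k‖ := by linarith
  have hfac : (1:ℝ)/2 ≤ 1 - Real.exp (-(2 * k.re)) - 2 * (M * Real.exp M / ‖k‖) := by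
    have e1 : Real.exp (-(2 * k.re)) ≤ 1/4 := by
      rw [Real.exp_neg, inv_le_comm₀ (Real.exp_pos _) (by norm_num)]
      have := Real.add_one_le_exp (2 * k.re)
      norm_num
      linarith
    have e2 : M * Real.exp M / ‖k‖ ≤ 1/8 := by
      rw [div_le_iff₀ hk0]
      linarith
    linarith
  set X := Real.exp k.re with hX
  have hXpos : 0 < X := Real.exp_pos _
  have l1 : X / 4 ≤ ‖k‖ * ‖f1 (k^2) 1‖ := by
    have := P1.flow k hkn hre
    have h2 := mul_le_mul_of_nonneg_left hfac hXpos.le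
    linarith
  have l2 : X / 4 ≤ ‖k‖ * ‖f2 (k^2) 1‖ := by
    have := P2.flow k hkn hre
    have h2 := mul_le_mul_of_nonneg_left hfac hXpos.le
    linarith
  have u1 : ‖k‖ * ‖f1 (k^2) 1‖ ≤ X * Real.exp M := by simpa using P1.fup k hkn hre 1 (by simp)
  have u2 : ‖k‖ * ‖f2 (k^2) 1‖ ≤ X * Real.exp M := by simpa using P2.fup k hkn hre 1 (by simp)
  have v1 := P1.fup k hkn hre x hx
  have v2 := P2.fup k hkn hre x hx
  have w1 := P1.sup k hkn hre x hx
  have w2 := P2.sup k hkn hre x hx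
  have hXX : Real.exp (k.re * x) * Real.exp (k.re * (1 - x)) = X := by
    rw [← Real.exp_add]; congr 1; ring
  have r1 := P1.rel (k^2) hx
  have r2 := P2.rel (k^2) hx
  have hWk := hW (k^2)
  set F := c1 (k^2) x * s2 (k^2) x - c2 (k^2) x * s1 (k^2) x
  have hid : f1 (k^2) 1 * f2 (k^2) 1 * F =
      f1 (k^2) x * f2 (k^2) 1 * s2 (k^2) x - f2 (k^2) x * f1 (k^2) 1 * s1 (k^2) x := by
    rw [r1, r2]
    simp only [F]
    linear_combination (-s1 (k^2) x * s2 (k^2) x) * hWk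
  have hn : ‖f1 (k^2) 1‖ * ‖f2 (k^2) 1‖ * ‖F‖ ≤
      ‖f1 (k^2) x‖ * ‖f2 (k^2) 1‖ * ‖s2 (k^2) x‖ + ‖f2 (k^2) x‖ * ‖f1 (k^2) 1‖ * ‖s1 (k^2) x‖ := by
    have := norm_sub_le (f1 (k^2) x * f2 (k^2) 1 * s2 (k^2) x) (f2 (k^2) x * f1 (k^2) 1 * s1 (k^2) x)
    rw [← hid] at this
    simpa only [norm_mul] using this
  have t1 : (‖k‖ * ‖f1 (k^2) x‖) * (‖k‖ * ‖f2 (k^2) 1‖) * (‖k‖ * ‖s2 (k^2) x‖) ≤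
      (Real.exp (k.re * x) * Real.exp M) * (X * Real.exp M) * (Real.exp (k.re * (1 - x)) * Real.exp M) := by
    gcongr
  have t2 : (‖k‖ * ‖f2 (k^2) x‖) * (‖k‖ * ‖f1 (k^2) 1‖) * (‖k‖ * ‖s1 (k^2) x‖) ≤
      (Real.exp (k.re * x) * Real.exp M) * (X * Real.exp M) * (Real.exp (k.re * (1 - x)) * Real.exp M) := by
    gcongr
  have t3 : (Real.exp (k.re * x) * Real.exp M) * (X * Real.exp M) *
      (Real.exp (k.re * (1 - x)) * Real.exp M) = X^2 * Real.exp M ^ 3 := by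
    calc _ = (Real.exp (k.re * x) * Real.exp (k.re * (1 - x))) * X * Real.exp M ^ 3 := by ring
      _ = _ := by rw [hXX]; ring
  rw [t3] at t1 t2
  have t4 : (X / 4) * (X / 4) * (‖k‖ * ‖F‖) ≤
      (‖k‖ * ‖f1 (k^2) 1‖) * (‖k‖ * ‖f2 (k^2) 1‖) * (‖k‖ * ‖F‖) := by gcongr
  have t5 : (‖k‖ * ‖f1 (k^2) 1‖) * (‖k‖ * ‖f2 (k^2) 1‖) * (‖k‖ * ‖F‖) ≤ 2 * (X^2 * Real.exp M ^ 3) := by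
    have := mul_le_mul_of_nonneg_left hn (by positivity : 0 ≤ ‖k‖^3)
    linarith
  have t6 : X^2 * (‖k‖ * ‖F‖) ≤ X^2 * (32 * Real.exp M ^ 3) := by linarith
  have t7 : ‖k‖ * ‖F‖ ≤ 32 * Real.exp M ^ 3 := le_of_mul_le_mul_left t6 (by positivity)
  rw [le_div_iff₀ (by linarith)]
  calc ‖F‖ * k.re ≤ ‖F‖ * ‖k‖ := by gcongr
    _ = ‖k‖ * ‖F‖ := mul_comm _ _
    _ ≤ _ := t7

lemma growth (P1 : Pack Q1 M f1 f1' s1 s1' c1 c1') (P2 : Pack Q2 M f2 f2' s2 s2' c2 c2')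
    {x : ℝ} (hx : x ∈ Icc (0:ℝ) 1) (k : ℂ) (hk : 1 ≤ ‖k‖) :
    ‖c1 (k^2) x * s2 (k^2) x - c2 (k^2) x * s1 (k^2) x‖ ≤
      2 * Real.exp M ^ 2 * Real.exp (2 * ‖k‖) := by
  wlog hre : 0 ≤ k.re generalizing k
  · have := this (-k) (by simpa using hk) (by simp; linarith)
    simpa using this
  have hE : Real.exp (k.re * (1 - x)) ≤ Real.exp ‖k‖ := by
    apply Real.exp_le_exp.2
    calc k.re * (1 - x) ≤ k.re * 1 := by gcongr; linarith [hx.1]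
      _ ≤ ‖k‖ := by simpa using Complex.re_le_norm k
  have hs : ∀ z : ℂ, ‖k‖ * ‖z‖ ≤ Real.exp (k.re * (1 - x)) * Real.exp M →
      ‖z‖ ≤ Real.exp ‖k‖ * Real.exp M := by
    intro z hz
    calc ‖z‖ ≤ ‖k‖ * ‖z‖ := le_mul_of_one_le_left (norm_nonneg _) hk
      _ ≤ _ := hz
      _ ≤ _ := by gcongr
  have w1 := hs _ (P1.sup k hk hre x hx)
  have w2 := hs _ (P2.sup k hk hre x hx)
  have v1 : ‖c1 (k^2) x‖ ≤ Real.exp ‖k‖ * Real.exp M := (P1.cup k hk hre x hx).trans (by gcongr)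
  have v2 : ‖c2 (k^2) x‖ ≤ Real.exp ‖k‖ * Real.exp M := (P2.cup k hk hre x hx).trans (by gcongr)
  have h2 : Real.exp (2 * ‖k‖) = Real.exp ‖k‖ ^ 2 := by rw [← Real.exp_nat_mul]; norm_num
  rw [h2]
  calc _ ≤ ‖c1 (k^2) x‖ * ‖s2 (k^2) x‖ + ‖c2 (k^2) x‖ * ‖s1 (k^2) x‖ := by
        simpa only [norm_mul] using norm_sub_le (c1 (k^2) x * s2 (k^2) x) (c2 (k^2) x * s1 (k^2) x)
    _ ≤ (Real.exp ‖k‖ * Real.exp M) * (Real.exp ‖k‖ * Real.exp M) +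
        (Real.exp ‖k‖ * Real.exp M) * (Real.exp ‖k‖ * Real.exp M) := by gcongr
    _ = _ := by ring

lemma ray_bdd (g : ℝ → ℂ) (hg : Continuous g) (T D : ℝ) (hT : 1 ≤ T)
    (h : ∀ t, T ≤ t → ‖g t‖ ≤ D / t) : ∃ C, ∀ t, 0 ≤ t → ‖g t‖ ≤ C := by
  obtain ⟨C, hC⟩ := isCompact_Icc.exists_bound_of_continuousOn (s := Icc 0 T) hg.continuousOn
  refine ⟨max C |D|, fun t ht => ?_⟩
  rcases le_total t T with h1 | h1
  · exact (hC t ⟨ht, h1⟩).trans (le_max_left _ _)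
  · refine (h t h1).trans (le_trans ?_ (le_max_right _ _))
    calc D / t ≤ |D| / t := by gcongr; exact le_abs_self D
      _ ≤ |D| := div_le_self (abs_nonneg _) (by linarith)

/-- Phragmen-Lindelof plus Liouville -/
lemma entire_zero (F : ℂ → ℂ) (hF : Differentiable ℂ F) (A T D : ℝ) (hT : 1 ≤ T)
    (hgr : ∀ k : ℂ, 1 ≤ ‖k‖ → ‖F (k^2)‖ ≤ A * Real.exp (2 * ‖k‖))
    (hray : ∀ k : ℂ, T ≤ k.re → ‖F (k^2)‖ ≤ D / k.re) (k : ℂ) : F (k^2) = 0 := by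
  let H : ℂ → ℂ := fun w => F (((1 + Complex.I) * w)^2)
  have hH : Differentiable ℂ H := hF.comp (by fun_prop)
  have hr1 : ∀ t : ℝ, T ≤ t → ‖H t‖ ≤ D / t := by
    intro t ht
    have := hray ((1 + Complex.I) * t) (by simpa using ht)
    simpa [H] using this
  have hr2 : ∀ t : ℝ, T ≤ t → ‖H (t * Complex.I)‖ ≤ D / t := by
    intro t ht
    have := hray ((1 - Complex.I) * t) (by simpa using ht)
    have he : ((1 + Complex.I) * (t * Complex.I))^2 = ((1 - Complex.I) * t)^2 := by
      linear_combination (2 * Complex.I * t^2 + Complex.I^2 * t ^ 2 - t ^ 2) * Complex.I_sq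
    simp only [H]
    rw [he]
    simpa using this
  obtain ⟨C1, hC1⟩ := ray_bdd (fun t => H t) (hH.continuous.comp Complex.continuous_ofReal) T D hT hr1
  obtain ⟨C2, hC2⟩ := ray_bdd (fun t => H (t * Complex.I))
    (hH.continuous.comp (Complex.continuous_ofReal.mul continuous_const)) T D hT hr2
  set C := max C1 C2
  have b1 : ∀ t : ℝ, 0 ≤ t → ‖H t‖ ≤ C := fun t ht => (hC1 t ht).trans (le_max_left _ _)
  have b2 : ∀ t : ℝ, 0 ≤ t → ‖H (t * Complex.I)‖ ≤ C := fun t ht => (hC2 t ht).trans (le_max_right _ _)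
  have heven : ∀ w, H (-w) = H w := by intro w; simp [H]
  have hO : ∀ s : Set ℂ, ∃ c < (2:ℝ),
      ∃ B, H =O[Bornology.cobounded ℂ ⊓ Filter.principal s] fun z => Real.exp (B * ‖z‖ ^ c) := by
    intro s
    refine ⟨1, by norm_num, 4, ?_⟩
    refine Asymptotics.IsBigO.of_bound |A| ?_
    apply Filter.Eventually.filter_mono inf_le_left
    have : ∀ᶠ z : ℂ in Bornology.cobounded ℂ, 1 ≤ ‖z‖ :=
      tendsto_norm_cobounded_atTop.eventually (eventually_ge_atTop 1)
    filter_upwards [this] with z hz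
    have hnI : ‖(1 + Complex.I : ℂ)‖^2 = 2 := by
      rw [← Complex.normSq_eq_norm_sq, Complex.normSq_apply]; norm_num
    have hnn := norm_nonneg (1 + Complex.I : ℂ)
    have hn1 : 1 ≤ ‖(1 + Complex.I : ℂ)‖ := by nlinarith
    have hn2 : ‖(1 + Complex.I : ℂ)‖ ≤ 2 := by nlinarith
    have h1 : 1 ≤ ‖(1 + Complex.I) * z‖ := by rw [norm_mul]; nlinarith
    have h2 : ‖(1 + Complex.I) * z‖ ≤ 2 * ‖z‖ := by rw [norm_mul]; gcongr
    refine (hgr _ h1).trans ?_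
    rw [Real.norm_eq_abs, abs_of_pos (Real.exp_pos _), Real.rpow_one]
    calc A * Real.exp (2 * ‖(1 + Complex.I) * z‖) ≤ |A| * Real.exp (2 * ‖(1 + Complex.I) * z‖) := by
          gcongr; exact le_abs_self A
      _ ≤ |A| * Real.exp (4 * ‖z‖) :=
          mul_le_mul_of_nonneg_left (Real.exp_le_exp.2 (by linarith)) (abs_nonneg A)
  have hup : ∀ w : ℂ, 0 ≤ w.im → ‖H w‖ ≤ C := by
    intro w hw
    rcases le_total 0 w.re with h | h
    · exact PhragmenLindelof.quadrant_I hH.diffContOnCl (hO _) b1 b2 h hw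
    · refine PhragmenLindelof.quadrant_II hH.diffContOnCl (hO _) ?_ b2 h hw
      intro t ht
      rw [← heven]
      have := b1 (-t) (by linarith)
      simpa using this
  have hall : ∀ w : ℂ, ‖H w‖ ≤ C := by
    intro w
    rcases le_total 0 w.im with h | h
    · exact hup w h
    · rw [← heven]; exact hup _ (by simpa using h)
  have hbd : Bornology.IsBounded (Set.range H) :=
    isBounded_iff_forall_norm_le.2 ⟨C, by rintro _ ⟨w, rfl⟩; exact hall w⟩
  have hconst := hH.apply_eq_apply_of_bounded hbd
  have hzero : H 0 = 0 := by
    have ht : Tendsto (fun t : ℝ => D / t) atTop (𝓝 0) := tendsto_const_nhds.div_atTop tendsto_id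
    have : ‖H 0‖ ≤ 0 := by
      refine ge_of_tendsto ht ?_
      filter_upwards [eventually_ge_atTop T] with t ht
      rw [hconst 0 t]
      exact hr1 t ht
    simpa using this
  have := hconst ((1 - Complex.I) / 2 * k) 0
  rw [hzero] at this
  rw [← this]
  simp only [H]
  congr 1
  have : (1 + Complex.I) * ((1 - Complex.I) / 2 * k) = k := by
    linear_combination (-k / 2) * Complex.I_sq
  rw [this]

lemma F_zero (P1 : Pack Q1 M f1 f1' s1 s1' c1 c1') (P2 : Pack Q2 M f2 f2' s2 s2' c2 c2')
    (hM0 : 0 ≤ M)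
    (hW : ∀ l, f1' l 1 * f2 l 1 = f2' l 1 * f1 l 1) {x : ℝ} (hx : x ∈ Icc (0:ℝ) 1) (k : ℂ) :
    c1 (k^2) x * s2 (k^2) x - c2 (k^2) x * s1 (k^2) x = 0 := by
  have hMM : 0 ≤ M * Real.exp M := by positivity
  exact entire_zero (fun l => c1 l x * s2 l x - c2 l x * s1 l x)
    (((P1.cd x hx).mul (P2.sd x hx)).sub ((P2.cd x hx).mul (P1.sd x hx)))
    (2 * Real.exp M ^ 2) (2 + 8 * (M * Real.exp M)) (32 * Real.exp M ^ 3) (by linarith)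
    (growth P1 P2 hx) (ray_bound P1 P2 hM0 hW hx) k

lemma sq_eq (P1 : Pack Q1 M f1 f1' s1 s1' c1 c1') (P2 : Pack Q2 M f2 f2' s2 s2' c2 c2') (l : ℂ)
    (hF : ∀ x ∈ Icc (0:ℝ) 1, c1 l x * s2 l x - c2 l x * s1 l x = 0)
    {x : ℝ} (hx : x ∈ Ioo (0:ℝ) 1) : s1 l x ^ 2 - s2 l x ^ 2 = 0 := by
  have hxI := Ioo_subset_Icc_self hx
  have hd := ((P1.csol l x hxI).1.mul (P2.ssol l x hxI).1).sub
    ((P2.csol l x hxI).1.mul (P1.ssol l x hxI).1)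
  have hz : HasDerivAt (fun x => c1 l x * s2 l x - c2 l x * s1 l x) 0 x := by
    refine (hasDerivAt_const x (0:ℂ)).congr_of_eventuallyEq ?_
    filter_upwards [Ioo_mem_nhds hx.1 hx.2] with t ht
    exact hF t (Ioo_subset_Icc_self ht)
  have he := hd.unique hz
  have h0 := hF x hxI
  have w1 := P1.wr l hxI
  have w2 := P2.wr l hxI
  linear_combination (s1 l x * s2 l x) * he - (s1 l x * s2' l x + s2 l x * s1' l x) * h0
    - (s1 l x)^2 * w2 + (s2 l x)^2 * w1

lemma final_pt (P1 : Pack Q1 M f1 f1' s1 s1' c1 c1') (P2 : Pack Q2 M f2 f2' s2 s2' c2 c2') (l : ℂ)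
    (hF : ∀ x ∈ Icc (0:ℝ) 1, c1 l x * s2 l x - c2 l x * s1 l x = 0)
    {x : ℝ} (hx : x ∈ Ioo (0:ℝ) 1) (hs : s1 l x ≠ 0) : Q1 x = Q2 x := by
  have d1 : ∀ x ∈ Ioo (0:ℝ) 1, s1 l x * s1' l x - s2 l x * s2' l x = 0 := by
    intro x hx
    have hxI := Ioo_subset_Icc_self hx
    have hd := ((P1.ssol l x hxI).1.pow 2).sub ((P2.ssol l x hxI).1.pow 2)
    have hz : HasDerivAt (fun x => s1 l x ^ 2 - s2 l x ^ 2) 0 x := by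
      refine (hasDerivAt_const x (0:ℂ)).congr_of_eventuallyEq ?_
      filter_upwards [Ioo_mem_nhds hx.1 hx.2] with t ht
      exact sq_eq P1 P2 l hF ht
    have he := hd.unique hz
    simp at he
    linear_combination he / 2
  have hxI := Ioo_subset_Icc_self hx
  have hd := ((P1.ssol l x hxI).1.mul (P1.ssol l x hxI).2).sub
    ((P2.ssol l x hxI).1.mul (P2.ssol l x hxI).2)
  have hz : HasDerivAt (fun x => s1 l x * s1' l x - s2 l x * s2' l x) 0 x := by
    refine (hasDerivAt_const x (0:ℂ)).congr_of_eventuallyEq ?_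
    filter_upwards [Ioo_mem_nhds hx.1 hx.2] with t ht
    exact d1 t ht
  have he := hd.unique hz
  have h0 := sq_eq P1 P2 l hF hx
  have h1 := d1 x hx
  have hp : s1 l x ^ 4 * ((Q1 x : ℂ) - Q2 x) = 0 := by
    linear_combination (s1 l x)^2 * he - (s1 l x * s1' l x + s2 l x * s2' l x) * h1
      + ((s2' l x)^2 - ((Q2 x : ℂ) + l) * (s1 l x)^2) * h0
  have : ((Q1 x : ℂ) - Q2 x) = 0 := by simpa [hs] using hp
  exact_mod_cast sub_eq_zero.1 this

lemma exists_ne (P1 : Pack Q1 M f1 f1' s1 s1' c1 c1') {x : ℝ} (hx : x ∈ Ioo (0:ℝ) 1) :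
    ∃ k : ℂ, s1 (k^2) x ≠ 0 := by
  have hx1 : 0 < 1 - x := by linarith [hx.2]
  have t1 : Tendsto (fun t : ℝ => Real.exp (-(2 * t * (1 - x)))) atTop (𝓝 0) := by
    apply Real.tendsto_exp_neg_atTop_nhds_zero.comp
    apply Tendsto.atTop_mul_const hx1
    exact Tendsto.const_mul_atTop two_pos tendsto_id
  have t2 : Tendsto (fun t : ℝ => M * Real.exp M / t) atTop (𝓝 0) :=
    tendsto_const_nhds.div_atTop tendsto_id
  have t3 : Tendsto (fun t : ℝ => 1 - Real.exp (-(2 * t * (1 - x))) - 2 * (M * Real.exp M / t))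
      atTop (𝓝 (1 - 0 - 2 * 0)) := (tendsto_const_nhds.sub t1).sub (t2.const_mul 2)
  have hev := t3.eventually (lt_mem_nhds (by norm_num : (0:ℝ) < 1 - 0 - 2 * 0))
  obtain ⟨t, ht, ht1⟩ := (hev.and (eventually_ge_atTop 1)).exists
  refine ⟨(t:ℂ), fun h => ?_⟩
  have hn : ‖(t:ℂ)‖ = t := by simp; linarith
  have := P1.slow (t:ℂ) (by rw [hn]; exact ht1) (by simp; linarith) x (Ioo_subset_Icc_self hx)
  rw [h, hn, norm_zero, mul_zero, mul_zero, Complex.ofReal_re] at this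
  have hpos := mul_pos (Real.exp_pos (t * (1 - x))) ht
  linarith

end main

end BM

/-- if the Weyl-type ratios `φ'(1,-λ;q)/φ(1,-λ;q)` of two continuous
potentials agree on an infinite set of positive `λ` with a finite accumulation
point, then the potentials coincide on `[0,1]`. -/
theorem weyl_ratio_on_accumulating_set_determines_potential
    (q1 q2 : ℝ → ℝ)
    (hq1 : ContinuousOn q1 (Set.Icc 0 1)) (hq2 : ContinuousOn q2 (Set.Icc 0 1))
    (S : Set ℝ) (hSpos : S ⊆ Set.Ioi 0) (hSinf : S.Infinite)
    (hSacc : ∃ p : ℝ, AccPt p (Filter.principal S))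
    (h : ∀ lam ∈ S, ∀ φ1 φ1' φ2 φ2' : ℝ → ℝ,
        IsSLSolution q1 (-lam) φ1 φ1' → IsSLSolution q2 (-lam) φ2 φ2' →
        φ1' 1 * φ2 1 = φ2' 1 * φ1 1) :
    ∀ x ∈ Set.Icc (0:ℝ) 1, q1 x = q2 x := by
  obtain ⟨M1, hM1⟩ := isCompact_Icc.exists_bound_of_continuousOn hq1
  obtain ⟨M2, hM2⟩ := isCompact_Icc.exists_bound_of_continuousOn hq2
  set M := max M1 M2
  have hb1 : ∀ x ∈ Icc (0:ℝ) 1, |q1 x| ≤ M := fun x hx => (hM1 x hx).trans (le_max_left _ _)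
  have hb2 : ∀ x ∈ Icc (0:ℝ) 1, |q2 x| ≤ M := fun x hx => (hM2 x hx).trans (le_max_right _ _)
  have hM0 : 0 ≤ M := (abs_nonneg _).trans (hb1 0 (by simp))
  obtain ⟨f1, f1', s1, s1', c1, c1', P1⟩ := BM.exists_pack q1 hq1 M hb1
  obtain ⟨f2, f2', s2, s2', c2, c2', P2⟩ := BM.exists_pack q2 hq2 M hb2
  have hWS : ∀ r ∈ S, f1' r 1 * f2 r 1 - f2' r 1 * f1 r 1 = 0 := by
    intro r hr
    obtain ⟨a1, a2, a3⟩ := P1.real hb1 (hSpos hr)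
    obtain ⟨b1, b2, b3⟩ := P2.real hb2 (hSpos hr)
    have := h r hr _ _ _ _ a1 b1
    rw [a2, a3, b2, b3]
    rw [sub_eq_zero]
    exact_mod_cast this
  have hW : ∀ l, f1' l 1 * f2 l 1 = f2' l 1 * f1 l 1 := by
    have hd : Differentiable ℂ (fun l => f1' l 1 * f2 l 1 - f2' l 1 * f1 l 1) :=
      (P1.fd'.mul P2.fd).sub (P2.fd'.mul P1.fd)
    obtain ⟨p, hp⟩ := hSacc
    rw [accPt_iff_frequently] at hp
    have hfr : ∃ᶠ z : ℂ in 𝓝[≠] (p:ℂ), f1' z 1 * f2 z 1 - f2' z 1 * f1 z 1 = 0 := by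
      rw [frequently_nhdsWithin_iff]
      have ht : Tendsto (fun r : ℝ => (r:ℂ)) (𝓝 p) (𝓝 (p:ℂ)) :=
        Complex.continuous_ofReal.tendsto p
      refine ht.frequently (hp.mono ?_)
      intro r hr
      exact ⟨hWS r hr.2, by simpa using hr.1⟩
    have := AnalyticOnNhd.eqOn_zero_of_preconnected_of_frequently_eq_zero (U := univ)
      (fun z _ => hd.analyticAt z) isPreconnected_univ (mem_univ _) hfr
    intro l
    exact sub_eq_zero.1 (this (mem_univ l))
  have hIoo : EqOn q1 q2 (Ioo 0 1) := by
    intro x hx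
    obtain ⟨k, hk⟩ := BM.exists_ne P1 hx
    exact BM.final_pt P1 P2 (k^2) (fun x hx => BM.F_zero P1 P2 hM0 hW hx k) hx hk
  have := hIoo.of_subset_closure hq1 hq2 Ioo_subset_Icc_self
    (by rw [closure_Ioo (by norm_num)])
  exact this
end
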